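/- arXiv:math/0609307 — 2 statements merged into one kernel-verified Lean document; each statement's English description precedes it below -/
import Mathlib

section
/- In the same setting, the process $\zeta(t)^2-\eta_t$, where $\zeta(t)=\widetilde w(\eta_t)$, is a martingale with respect to the filtration $(\mathcal M_t)$. Consequently the quadratic characteristic $\langle\zeta\rangle_t$ of the square-integrable martingale $\zeta$ equals $\eta_t$. -/
/-!
Condition on the path of `w`. Since `η_s` and `η_t` are functionals of that path, which is
independent of `w̃`, they become constants `0 ≤ a ≤ b` while `w̃` remains a Wiener process; the
claim then reduces to the fact that `⟪w̃(r), θ⟫² - r` is a martingale at deterministic times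
(`integral_sq_sub_mul_eq_zero`).

For this to work, an `M_s`-measurable `ξ` must become, once the path of `w` is fixed, a functional
of `w̃` on `[0, a]`. The σ-algebra `stopSigma` of path functionals with exactly this property
pulls back to one containing `M_s` (`MFilt_le_comap_stopSigma`), so no monotone class argument is
needed. The conditioning itself is Fubini's theorem on the product of the two path laws. Evaluation
of a path at a time is not jointly measurable on the product of path spaces, so it is replaced by
the version `evalLim`, which agrees with it along continuous paths. Integrability over the
product comes from Tonelli: the inner integral of `⟪w̃(r), θ⟫²` is `r`, and `η` is integrable.
-/

open MeasureTheory ProbabilityTheory Filter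
open scoped RealInnerProductSpace

noncomputable section

variable {Ω : Type} [MeasurableSpace Ω]

/-- A standard one-dimensional Wiener process on `(Ω, P)`. -/
structure IsWiener1 (P : Measure Ω) (w : ℝ → Ω → ℝ) : Prop where
  meas : ∀ t, Measurable (w t)
  start : ∀ᵐ ω ∂P, w 0 ω = 0
  cont : ∀ᵐ ω ∂P, Continuous fun t => w t ω
  incr_indep : ∀ s t : ℝ, 0 ≤ s → s ≤ t →
    IndepFun (fun ω => w t ω - w s ω) (fun ω (u : Set.Icc (0:ℝ) s) => w u ω) P
  incr_law : ∀ s t : ℝ, 0 ≤ s → s ≤ t →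
    Measure.map (fun ω => w t ω - w s ω) P = gaussianReal 0 (Real.toNNReal (t - s))

/-- A standard Wiener process with values in a Euclidean space `E`:
every projection on a unit vector of an increment is a centered Gaussian of
variance `t - s`, and increments are independent of the past. -/
structure IsWiener {E : Type} [NormedAddCommGroup E] [InnerProductSpace ℝ E]
    [MeasurableSpace E] [BorelSpace E] (P : Measure Ω) (w : ℝ → Ω → E) : Prop where
  meas : ∀ t, Measurable (w t)
  start : ∀ᵐ ω ∂P, w 0 ω = 0
  cont : ∀ᵐ ω ∂P, Continuous fun t => w t ω
  incr_indep : ∀ s t : ℝ, 0 ≤ s → s ≤ t →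
    IndepFun (fun ω => w t ω - w s ω) (fun ω (u : Set.Icc (0:ℝ) s) => w u ω) P
  incr_law : ∀ θ : E, ‖θ‖ = 1 → ∀ s t : ℝ, 0 ≤ s → s ≤ t →
    Measure.map (fun ω => ⟪w t ω - w s ω, θ⟫) P = gaussianReal 0 (Real.toNNReal (t - s))

/-- A standard Wiener process taking values in the hyperplane `S` orthogonal to `ν`. -/
structure IsWienerIn {E : Type} [NormedAddCommGroup E] [InnerProductSpace ℝ E]
    [MeasurableSpace E] [BorelSpace E] (P : Measure Ω) (ν : E) (w : ℝ → Ω → E) : Prop where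
  meas : ∀ t, Measurable (w t)
  start : ∀ᵐ ω ∂P, w 0 ω = 0
  cont : ∀ᵐ ω ∂P, Continuous fun t => w t ω
  mem : ∀ t ω, ⟪w t ω, ν⟫ = 0
  incr_indep : ∀ s t : ℝ, 0 ≤ s → s ≤ t →
    IndepFun (fun ω => w t ω - w s ω) (fun ω (u : Set.Icc (0:ℝ) s) => w u ω) P
  incr_law : ∀ θ : E, ‖θ‖ = 1 → ⟪θ, ν⟫ = 0 → ∀ s t : ℝ, 0 ≤ s → s ≤ t →
    Measure.map (fun ω => ⟪w t ω - w s ω, θ⟫) P = gaussianReal 0 (Real.toNNReal (t - s))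

/-- Two processes are independent (as path-valued random variables). -/
def IndepProc {E F : Type} [MeasurableSpace E] [MeasurableSpace F]
    (P : Measure Ω) (w : ℝ → Ω → E) (w' : ℝ → Ω → F) : Prop :=
  IndepFun (fun ω (t : ℝ) => w t ω) (fun ω (t : ℝ) => w' t ω) P

/-- The natural filtration `F^w_t = σ{w(u), 0 ≤ u ≤ t}` of a process `w`. -/
def natFilt {E : Type} [MeasurableSpace E] (w : ℝ → Ω → E) (t : ℝ) : MeasurableSpace Ω :=
  ⨆ u ∈ Set.Icc (0:ℝ) t, MeasurableSpace.comap (w u) inferInstance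

/-- The σ-algebra `F̃_t = σ{ {w̃(s) ∈ Γ} ∩ {η_t ≥ s} : s ≥ 0, Γ Borel }`. -/
def tildeFilt {E : Type} [MeasurableSpace E] (wt : ℝ → Ω → E) (η : ℝ → Ω → ℝ) (t : ℝ) :
    MeasurableSpace Ω :=
  MeasurableSpace.generateFrom
    {A | ∃ s : ℝ, 0 ≤ s ∧ ∃ Γ : Set E, MeasurableSet Γ ∧
      A = {ω | wt s ω ∈ Γ ∧ s ≤ η t ω}}

/-- The enlarged filtration `M_t = F^w_t ∨ F̃_t`. -/
def MFilt {E F : Type} [MeasurableSpace E] [MeasurableSpace F]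
    (w : ℝ → Ω → E) (wt : ℝ → Ω → F) (η : ℝ → Ω → ℝ) (t : ℝ) : MeasurableSpace Ω :=
  natFilt w t ⊔ tildeFilt wt η t

/-- `η` is a continuous nondecreasing process, adapted to the natural filtration of `w`,
starting at `0`. -/
structure NiceEta {E : Type} [MeasurableSpace E] (P : Measure Ω) (w : ℝ → Ω → E)
    (η : ℝ → Ω → ℝ) : Prop where
  adapted : ∀ t : ℝ, 0 ≤ t → Measurable[natFilt w t] (η t)
  cont : ∀ᵐ ω ∂P, Continuous fun t => η t ω
  mono : ∀ᵐ ω ∂P, Monotone fun t => η t ω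
  zero : ∀ᵐ ω ∂P, η 0 ω = 0

/-- `(x¹, η)` is a skew Brownian motion pair with parameter `q`, driven by the
one-dimensional Wiener process `w1` and started at `a`: `x¹(t) = a + q η_t + w¹(t)`
and `η` is the symmetric local time of `x¹` at `0`. -/
structure IsSkewLT (P : Measure Ω) (q : ℝ) (w1 : ℝ → Ω → ℝ) (a : ℝ)
    (x1 : ℝ → Ω → ℝ) (η : ℝ → Ω → ℝ) : Prop where
  adapted_x : ∀ t : ℝ, 0 ≤ t → Measurable[natFilt w1 t] (x1 t)
  adapted_eta : ∀ t : ℝ, 0 ≤ t → Measurable[natFilt w1 t] (η t)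
  cont : ∀ᵐ ω ∂P, Continuous fun t => η t ω
  mono : ∀ᵐ ω ∂P, Monotone fun t => η t ω
  zero : ∀ᵐ ω ∂P, η 0 ω = 0
  eqn : ∀ t : ℝ, 0 ≤ t → ∀ᵐ ω ∂P, x1 t ω = a + q * η t ω + w1 t ω
  localTime : ∀ t : ℝ, 0 ≤ t → ∀ᵐ ω ∂P,
    Tendsto (fun ε : ℝ =>
        (1 / (2 * ε)) * ∫ τ in (0:ℝ)..t, (if |x1 τ ω| ≤ ε then (1:ℝ) else 0))
      (nhdsWithin 0 (Set.Ioi 0)) (nhds (η t ω))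

/-- Orthogonal projection on the hyperplane orthogonal to the unit vector `ν`. -/
def projS {E : Type} [NormedAddCommGroup E] [InnerProductSpace ℝ E] (ν : E) (v : E) : E :=
  v - ⟪v, ν⟫ • ν

/-- `x` solves, on `[s, ∞)`, the SDE
`x(t) = ξ + ∫_s^t (qν + α(xˢ(τ))) dη_τ + ∫_s^t β̃(xˢ(τ)) dζ_τ + w(t) - w(s)`,
the two integrals being understood as limits in probability of left Riemann sums
(Lebesgue–Stieltjes resp. Itô integrals). -/
structure SolvesFrom {E : Type} [NormedAddCommGroup E] [InnerProductSpace ℝ E]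
    [MeasurableSpace E] [BorelSpace E]
    (P : Measure Ω) (Mfil : ℝ → MeasurableSpace Ω) (ν : E) (q : ℝ)
    (α : E → E) (βt : E → E →L[ℝ] E)
    (w : ℝ → Ω → E) (η : ℝ → Ω → ℝ) (ζ : ℝ → Ω → E)
    (s : ℝ) (ξ : Ω → E) (x : ℝ → Ω → E) : Prop where
  init : ∀ᵐ ω ∂P, x s ω = ξ ω
  adapted : ∀ t : ℝ, s ≤ t → Measurable[Mfil t] (x t)
  cont : ∀ᵐ ω ∂P, ContinuousOn (fun t => x t ω) (Set.Ici s)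
  eqn : ∀ t : ℝ, s ≤ t → ∃ A M : Ω → E,
    TendstoInMeasure P
      (fun n ω => ∑ k ∈ Finset.range n,
        (η (s + ((k:ℝ)+1) * (t - s) / n) ω - η (s + (k:ℝ) * (t - s) / n) ω) •
          (q • ν + α (projS ν (x (s + (k:ℝ) * (t - s) / n) ω)))) atTop A ∧
    TendstoInMeasure P
      (fun n ω => ∑ k ∈ Finset.range n,
        (βt (projS ν (x (s + (k:ℝ) * (t - s) / n) ω)))
          (ζ (s + ((k:ℝ)+1) * (t - s) / n) ω - ζ (s + (k:ℝ) * (t - s) / n) ω)) atTop M ∧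
    ∀ᵐ ω ∂P, x t ω = ξ ω + A ω + M ω + (w t ω - w s ω)

/-! ### Path space -/

/-- The σ-algebra on path space generated by the coordinates with times in `[0, r]`. -/
def pathPast (F : Type) [MeasurableSpace F] (r : ℝ) : MeasurableSpace (ℝ → F) :=
  MeasurableSpace.comap (fun (q : ℝ → F) (u : Set.Icc (0:ℝ) r) => q u) inferInstance

/-- The σ-algebra on pairs of paths `(p, q)` whose sets `K` are jointly measurable and have every
section `K_p` determined by `q` on `[0, a p]`. Pulled back along `(w, w̃)` with `η_s = a ∘ w`, it
contains `M_s`, even with the whole path of `w` adjoined. -/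
def stopSigma {E F : Type} [MeasurableSpace E] [MeasurableSpace F] (a : (ℝ → E) → ℝ) :
    MeasurableSpace ((ℝ → E) × (ℝ → F)) :=
  Prod.instMeasurableSpace ⊓ ⨅ p : ℝ → E, MeasurableSpace.map (Prod.mk p) (pathPast F (a p))

/-- A jointly measurable version of `(r, q) ↦ ⟪q r, θ⟫`: along continuous paths `q` and for
`0 ≤ r`, the upper limit is the limit of the values at the grid points `⌈r n⌉ / n`. -/
def evalLim {F : Type} [NormedAddCommGroup F] [InnerProductSpace ℝ F] (θ : F)
    (x : ℝ × (ℝ → F)) : ℝ :=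
  limsup (fun n : ℕ => ⟪x.2 ((⌈x.1 * (n : ℝ)⌉₊ : ℝ) / (n : ℝ)), θ⟫) atTop

section Paths

variable {F : Type} [NormedAddCommGroup F] [InnerProductSpace ℝ F]

lemma measurable_inner_right_const [MeasurableSpace F] [BorelSpace F] (θ : F) :
    Measurable fun x : F => ⟪x, θ⟫ :=
  (continuous_id.inner continuous_const).measurable

lemma measurable_evalLim [MeasurableSpace F] [BorelSpace F] (θ : F) : Measurable (evalLim θ) := by
  refine Measurable.limsup fun n => ?_
  have h : Measurable fun y : ℕ × (ℝ → F) => ⟪y.2 ((y.1 : ℝ) / (n : ℝ)), θ⟫ :=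
    measurable_from_prod_countable_right fun k =>
      (measurable_inner_right_const θ).comp (measurable_pi_apply ((k : ℝ) / (n : ℝ)))
  exact h.comp ((Nat.measurable_ceil.comp (measurable_fst.mul_const _)).prodMk measurable_snd)

lemma evalLim_eq (θ : F) {q : ℝ → F} (hq : Continuous q) {r : ℝ} (hr : 0 ≤ r) :
    evalLim θ (r, q) = ⟪q r, θ⟫ := by
  have h1 : Tendsto (fun n : ℕ => (⌈r * (n : ℝ)⌉₊ : ℝ) / (n : ℝ)) atTop (nhds r) :=
    (tendsto_nat_ceil_mul_div_atTop hr).comp tendsto_natCast_atTop_atTop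
  have hc : Continuous fun u => ⟪q u, θ⟫ := hq.inner continuous_const
  exact ((hc.tendsto r).comp h1).limsup_eq

end Paths

/-! ### Deterministic times -/

section OneDim

variable {F : Type} [NormedAddCommGroup F] [InnerProductSpace ℝ F] [MeasurableSpace F]
  [BorelSpace F] {P : Measure Ω} {wt : ℝ → Ω → F}

lemma measurable_proj (hwt : IsWiener P wt) (θ : F) (t : ℝ) :
    Measurable fun ω => ⟪wt t ω, θ⟫ :=
  (measurable_inner_right_const θ).comp (hwt.meas t)

lemma measurable_incr (hwt : IsWiener P wt) (θ : F) (a b : ℝ) :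
    Measurable fun ω => ⟪wt b ω - wt a ω, θ⟫ := by
  simp only [inner_sub_left]
  exact (measurable_proj hwt θ b).sub (measurable_proj hwt θ a)

lemma incr_moments (hwt : IsWiener P wt) {θ : F} (hθ : ‖θ‖ = 1) {a b : ℝ} (ha : 0 ≤ a)
    (hab : a ≤ b) :
    MemLp (fun ω => ⟪wt b ω - wt a ω, θ⟫) 2 P ∧ ∫ ω, ⟪wt b ω - wt a ω, θ⟫ ∂P = 0 ∧
      ∫ ω, ⟪wt b ω - wt a ω, θ⟫ ^ 2 ∂P = b - a := by
  have hm := measurable_incr hwt θ a b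
  have hl : HasLaw (fun ω => ⟪wt b ω - wt a ω, θ⟫) (gaussianReal 0 (Real.toNNReal (b - a))) P :=
    ⟨hm.aemeasurable, hwt.incr_law θ hθ a b ha hab⟩
  have hmean : ∫ ω, ⟪wt b ω - wt a ω, θ⟫ ∂P = 0 := by
    rw [hl.integral_eq, integral_id_gaussianReal]
  refine ⟨?_, hmean, ?_⟩
  · have := memLp_id_gaussianReal (μ := 0) (v := Real.toNNReal (b - a)) 2
    rw [← hl.map_eq] at this
    exact (memLp_map_measure_iff this.1 hm.aemeasurable).1 this
  · have := hl.variance_eq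
    rw [variance_of_integral_eq_zero hm.aemeasurable hmean, variance_id_gaussianReal,
      Real.coe_toNNReal _ (sub_nonneg.2 hab)] at this
    exact this

lemma proj_moments (hwt : IsWiener P wt) {θ : F} (hθ : ‖θ‖ = 1) {a : ℝ} (ha : 0 ≤ a) :
    MemLp (fun ω => ⟪wt a ω, θ⟫) 2 P ∧ ∫ ω, ⟪wt a ω, θ⟫ ^ 2 ∂P = a := by
  obtain ⟨h1, -, h3⟩ := incr_moments hwt hθ le_rfl ha
  have h : (fun ω => ⟪wt a ω - wt 0 ω, θ⟫) =ᵐ[P] fun ω => ⟪wt a ω, θ⟫ := by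
    filter_upwards [hwt.start] with ω hω
    rw [hω, sub_zero]
  refine ⟨(memLp_congr_ae h).1 h1, ?_⟩
  rw [sub_zero] at h3
  refine (integral_congr_ae ?_).trans h3
  filter_upwards [h] with ω hω
  rw [hω]

/-- The deterministic-time case: `⟪w̃, θ⟫² - t` is a martingale. The increment over `[a, b]` splits
as `Δ² - (b - a) + 2 ⟪w̃ a, θ⟫ Δ`, with `Δ` independent of the past up to `a`. -/
lemma integral_sq_sub_mul_eq_zero [IsProbabilityMeasure P] (hwt : IsWiener P wt) {θ : F}
    (hθ : ‖θ‖ = 1) {a b : ℝ} (ha : 0 ≤ a) (hab : a ≤ b) {k : (ℝ → F) → ℝ}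
    (hk : Measurable[pathPast F a] k) {C : ℝ} (hC : ∀ q, |k q| ≤ C) :
    ∫ ω, ((⟪wt b ω, θ⟫ ^ 2 - b) - (⟪wt a ω, θ⟫ ^ 2 - a)) * k (fun u => wt u ω) ∂P = 0 := by
  obtain ⟨hL, hmean, hvar⟩ := incr_moments hwt hθ ha hab
  obtain ⟨hLa, -⟩ := proj_moments hwt hθ ha
  set Δ : Ω → ℝ := fun ω => ⟪wt b ω - wt a ω, θ⟫ with hΔ
  set κ : Ω → ℝ := fun ω => k (fun u => wt u ω) with hκ
  set Xa : Ω → ℝ := fun ω => ⟪wt a ω, θ⟫ with hXa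
  have hpath : Measurable fun ω (u : ℝ) => wt u ω := measurable_pi_lambda _ hwt.meas
  have hle : pathPast F a ≤ MeasurableSpace.pi :=
    (measurable_pi_lambda _ fun u => measurable_pi_apply _).comap_le
  have hκm : Measurable κ := (hk.mono hle le_rfl).comp hpath
  -- `k` factors through restriction of paths to `[0, a]`, the past in `incr_indep`
  obtain ⟨k', hk', hkk'⟩ := Measurable.exists_eq_measurable_comp hk
  have hind := hwt.incr_indep a b ha hab
  have key : ∀ (f : ℝ → ℝ) (g : (Set.Icc (0:ℝ) a → F) → ℝ), Measurable f → Measurable g →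
      ∫ ω, f (Δ ω) * g (fun u => wt u ω) ∂P = (∫ ω, f (Δ ω) ∂P) * ∫ ω, g (fun u => wt u ω) ∂P := by
    intro f g hf hg
    have hi := hind.comp (hf.comp (measurable_inner_right_const θ)) hg
    refine hi.integral_fun_mul_eq_mul_integral ?_ ?_
    · exact (hf.comp (measurable_incr hwt θ a b)).aestronglyMeasurable
    · exact (hg.comp (measurable_pi_lambda _ fun u => hwt.meas u)).aestronglyMeasurable
  have hκeq : ∀ ω, κ ω = k' (fun u => wt u ω) := fun ω => congrFun hkk' _
  have e1 : ∫ ω, (Δ ω ^ 2 - (b - a)) * κ ω ∂P = 0 := by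
    simp only [hκeq]
    rw [key (fun x => x ^ 2 - (b - a)) k' (by fun_prop) hk',
      integral_sub hL.integrable_sq (integrable_const _), hvar]
    simp
  have e2 : ∫ ω, Δ ω * (Xa ω * κ ω) ∂P = 0 := by
    simp only [hκeq]
    have := key id (fun q => ⟪q ⟨a, ha, le_rfl⟩, θ⟫ * k' q) measurable_id
      (((measurable_inner_right_const θ).comp (measurable_pi_apply _)).mul hk')
    simp only [id] at this
    rw [hmean, zero_mul] at this
    exact this
  have hb : ∀ᵐ ω ∂P, ‖κ ω‖ ≤ C := ae_of_all _ fun ω => hC _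
  have i1 : Integrable (fun ω => (Δ ω ^ 2 - (b - a)) * κ ω) P :=
    (hL.integrable_sq.sub (integrable_const _)).mul_bdd hκm.aestronglyMeasurable hb
  have i2 : Integrable (fun ω => Δ ω * (Xa ω * κ ω)) P := by
    simp only [← mul_assoc]
    exact (hL.integrable_mul hLa).mul_bdd hκm.aestronglyMeasurable hb
  have hsplit : ∀ ω, ((⟪wt b ω, θ⟫ ^ 2 - b) - (⟪wt a ω, θ⟫ ^ 2 - a)) * κ ω =
      (Δ ω ^ 2 - (b - a)) * κ ω + 2 * (Δ ω * (Xa ω * κ ω)) := by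
    intro ω
    simp only [hΔ, hXa, inner_sub_left]
    ring
  refine (integral_congr_ae (ae_of_all _ hsplit)).trans ?_
  rw [integral_add i1 (i2.const_mul 2), integral_const_mul, e1, e2]
  simp

end OneDim

/-! ### The random times -/

/-- `M_s` is contained in the pullback of `stopSigma a` along the pair of paths `(w, w̃)`. -/
lemma MFilt_le_comap_stopSigma {E F : Type} [MeasurableSpace E] [MeasurableSpace F]
    {w : ℝ → Ω → E} {wt : ℝ → Ω → F} {η : ℝ → Ω → ℝ} {s : ℝ} {a : (ℝ → E) → ℝ}
    (ha : Measurable a) (hηa : ∀ ω, η s ω = a (fun u => w u ω)) :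
    MFilt w wt η s ≤
      MeasurableSpace.comap (fun ω => ((fun u => w u ω, fun u => wt u ω) : (ℝ → E) × (ℝ → F)))
        (stopSigma a) := by
  have hset : ∀ K : Set ((ℝ → E) × (ℝ → F)), MeasurableSet[stopSigma a] K ↔
      MeasurableSet K ∧ ∀ p, MeasurableSet[pathPast F (a p)] (Prod.mk p ⁻¹' K) := by
    intro K
    rw [stopSigma, MeasurableSpace.measurableSet_inf, MeasurableSpace.measurableSet_iInf]
    rfl
  refine sup_le (iSup₂_le fun u _ => ?_) (MeasurableSpace.generateFrom_le ?_)
  · rintro _ ⟨Γ, hΓ, rfl⟩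
    refine ⟨(fun x => x.1 u) ⁻¹' Γ, (hset _).2 ⟨?_, fun p => ?_⟩, rfl⟩
    · exact ((measurable_pi_apply u).comp measurable_fst) hΓ
    · exact MeasurableSet.const (p u ∈ Γ)
  · rintro _ ⟨u, hu, Γ, hΓ, rfl⟩
    refine ⟨{x | x.2 u ∈ Γ ∧ u ≤ a x.1}, (hset _).2 ⟨?_, fun p => ?_⟩, ?_⟩
    · exact (((measurable_pi_apply u).comp measurable_snd) hΓ).inter
        (measurableSet_le measurable_const (ha.comp measurable_fst))
    · by_cases hp : u ≤ a p
      · refine ⟨(fun q => q ⟨u, hu, hp⟩) ⁻¹' Γ, measurable_pi_apply _ hΓ, ?_⟩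
        ext q
        simp [hp]
      · have : Prod.mk p ⁻¹' {x : (ℝ → E) × (ℝ → F) | x.2 u ∈ Γ ∧ u ≤ a x.1} = ∅ := by
          ext q
          simp [hp]
        rw [this]
        exact (pathPast F (a p)).measurableSet_empty
    · ext ω
      simp [hηa]

/-- The process `ζ(t)² - η_t`, with `ζ(t) = w̃(η_t)` (projected on any unit
direction `θ`), is a martingale with respect to `(M_t)`; hence the characteristic of the
square-integrable martingale `ζ` equals `η`. -/
theorem characteristic_of_time_changed_martingale
    {E F : Type} [NormedAddCommGroup E] [InnerProductSpace ℝ E] [MeasurableSpace E] [BorelSpace E]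
    [NormedAddCommGroup F] [InnerProductSpace ℝ F] [MeasurableSpace F] [BorelSpace F]
    (P : Measure Ω) [IsProbabilityMeasure P]
    (w : ℝ → Ω → E) (wt : ℝ → Ω → F) (η : ℝ → Ω → ℝ)
    (hw : IsWiener P w) (hwt : IsWiener P wt) (hind : IndepProc P w wt)
    (hη : NiceEta P w η) (hint : ∀ t : ℝ, 0 ≤ t → Integrable (η t) P) :
    ∀ θ : F, ‖θ‖ = 1 → ∀ s t : ℝ, 0 ≤ s → s ≤ t → ∀ ξ : Ω → ℝ,
      Measurable[MFilt w wt η s] ξ → (∃ C, ∀ ω, |ξ ω| ≤ C) →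
      ∫ ω, ((⟪wt (η t ω) ω, θ⟫ ^ 2 - η t ω) - (⟪wt (η s ω) ω, θ⟫ ^ 2 - η s ω)) * ξ ω ∂P
        = 0 := by
  intro θ hθ s t hs hst ξ hξ ⟨C, hC⟩
  have ht : 0 ≤ t := hs.trans hst
  set G : Ω → ℝ → E := fun ω u => w u ω with hG
  set H : Ω → ℝ → F := fun ω u => wt u ω with hH
  have hGm : Measurable G := measurable_pi_lambda _ hw.meas
  have hHm : Measurable H := measurable_pi_lambda _ hwt.meas
  have hGH : Measurable fun ω => (G ω, H ω) := hGm.prodMk hHm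
  have hfact : ∀ r, 0 ≤ r → ∃ a : (ℝ → E) → ℝ, Measurable a ∧ η r = a ∘ G := fun r hr =>
    Measurable.exists_eq_measurable_comp <| (hη.adapted r hr).mono
      (iSup₂_le fun u _ => ((measurable_pi_apply u).comp (comap_measurable G)).comap_le) le_rfl
  obtain ⟨a, ham, hηa⟩ := hfact s hs
  obtain ⟨b, hbm, hηb⟩ := hfact t ht
  obtain ⟨k₀, hk₀, hξk₀⟩ := Measurable.exists_eq_measurable_comp (mY := stopSigma a)
    (hξ.mono (MFilt_le_comap_stopSigma (wt := wt) ham (congrFun hηa)) le_rfl)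
  -- truncation keeps the bound off the range of `(G, H)` too
  set k : (ℝ → E) × (ℝ → F) → ℝ := fun x => max (-C) (min C (k₀ x)) with hk
  have hC0 : 0 ≤ C := by
    obtain ⟨ω⟩ := Measure.nonempty_of_neZero P
    exact (abs_nonneg _).trans (hC ω)
  have hkC : ∀ x, |k x| ≤ C := fun x =>
    abs_le.2 ⟨le_max_left _ _, max_le (by linarith) (min_le_left _ _)⟩
  have hξk : ∀ ω, ξ ω = k (G ω, H ω) := by
    intro ω
    have h1 : ξ ω = k₀ (G ω, H ω) := congrFun hξk₀ ω
    have h2 := abs_le.1 (hC ω)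
    rw [h1] at h2
    rw [hk, h1]
    simp only
    rw [min_eq_right h2.2, max_eq_right h2.1]
  have htrunc : Measurable fun y : ℝ => max (-C) (min C y) := by fun_prop
  have hkm : Measurable k := htrunc.comp (hk₀.mono inf_le_left le_rfl)
  have hksec : ∀ p, Measurable[pathPast F (a p)] fun q => k (p, q) := fun p =>
    htrunc.comp fun S hS =>
      (MeasurableSpace.measurableSet_iInf.1 (MeasurableSpace.measurableSet_inf.1 (hk₀ hS)).2 p)
  set μ := P.map G with hμ
  set ν := P.map H with hν
  have : IsProbabilityMeasure μ := Measure.isProbabilityMeasure_map hGm.aemeasurable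
  have : IsProbabilityMeasure ν := Measure.isProbabilityMeasure_map hHm.aemeasurable
  have hprod : P.map (fun ω => (G ω, H ω)) = μ.prod ν :=
    (indepFun_iff_map_prod_eq_prod_map_map hGm.aemeasurable hHm.aemeasurable).1 hind
  have hab : ∀ᵐ ω ∂P, 0 ≤ η s ω ∧ η s ω ≤ η t ω := by
    filter_upwards [hη.mono, hη.zero] with ω hm h0
    exact ⟨h0 ▸ hm hs, hm hst⟩
  have hab' : ∀ᵐ p ∂μ, 0 ≤ a p ∧ a p ≤ b p := by
    refine (ae_map_iff hGm.aemeasurable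
      ((measurableSet_le measurable_const ham).inter (measurableSet_le ham hbm))).2 ?_
    rw [hηa, hηb] at hab
    exact hab
  have hEvalP : ∀ᵐ ω ∂P, ∀ r, 0 ≤ r → evalLim θ (r, H ω) = ⟪wt r ω, θ⟫ := by
    filter_upwards [hwt.cont] with ω hω r hr
    exact evalLim_eq θ hω hr
  have hev : ∀ r, Measurable fun q : ℝ → F => evalLim θ (r, q) := fun r =>
    (measurable_evalLim θ).comp measurable_prodMk_left
  have hsq : ∀ r, 0 ≤ r → Integrable (fun q => evalLim θ (r, q) ^ 2) ν ∧
      ∫ q, evalLim θ (r, q) ^ 2 ∂ν = r := by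
    intro r hr
    obtain ⟨h1, h2⟩ := proj_moments hwt hθ hr
    have he : (fun ω => ⟪wt r ω, θ⟫ ^ 2) =ᵐ[P] fun ω => evalLim θ (r, H ω) ^ 2 := by
      filter_upwards [hEvalP] with ω hω
      rw [hω r hr]
    have hm := (hev r).pow_const 2
    constructor
    · rw [hν, integrable_map_measure hm.aestronglyMeasurable hHm.aemeasurable]
      exact h1.integrable_sq.congr he
    · rw [hν, integral_map hHm.aemeasurable hm.aestronglyMeasurable, ← integral_congr_ae he, h2]
  have hevm : ∀ c : (ℝ → E) → ℝ, Measurable c →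
      Measurable fun x : (ℝ → E) × (ℝ → F) => evalLim θ (c x.1, x.2) ^ 2 := fun c hcm =>
    ((measurable_evalLim θ).comp ((hcm.comp measurable_fst).prodMk measurable_snd)).pow_const 2
  -- used for `c = a, b`: by Tonelli, the integral of `⟪w̃(c), θ⟫²` is that of `c`, hence finite
  have hint2 : ∀ c : (ℝ → E) → ℝ, Measurable c → (∀ᵐ p ∂μ, 0 ≤ c p) → Integrable c μ →
      Integrable (fun x : (ℝ → E) × (ℝ → F) => evalLim θ (c x.1, x.2) ^ 2 - c x.1)
        (μ.prod ν) := by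
    intro c hcm hc0 hci
    refine Integrable.sub ?_ (hci.comp_fst ν)
    rw [integrable_prod_iff (hevm c hcm).aestronglyMeasurable]
    constructor
    · filter_upwards [hc0] with p hp using (hsq _ hp).1
    · refine hci.congr ?_
      filter_upwards [hc0] with p hp
      simp only [Real.norm_eq_abs, abs_pow, sq_abs]
      exact (hsq _ hp).2.symm
  have hai : Integrable a μ := by
    rw [hμ, integrable_map_measure ham.aestronglyMeasurable hGm.aemeasurable, ← hηa]
    exact hint s hs
  have hbi : Integrable b μ := by
    rw [hμ, integrable_map_measure hbm.aestronglyMeasurable hGm.aemeasurable, ← hηb]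
    exact hint t ht
  set f : (ℝ → E) × (ℝ → F) → ℝ := fun x =>
    ((evalLim θ (b x.1, x.2) ^ 2 - b x.1) - (evalLim θ (a x.1, x.2) ^ 2 - a x.1)) * k x with hf
  have hfm : Measurable f :=
    (((hevm b hbm).sub (hbm.comp measurable_fst)).sub
      ((hevm a ham).sub (ham.comp measurable_fst))).mul hkm
  have hfi : Integrable f (μ.prod ν) :=
    ((hint2 b hbm (hab'.mono fun p h => h.1.trans h.2) hbi).sub
      (hint2 a ham (hab'.mono fun p h => h.1) hai)).mul_bdd hkm.aestronglyMeasurable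
      (ae_of_all _ hkC)
  calc _ = ∫ ω, f (G ω, H ω) ∂P := by
        refine integral_congr_ae ?_
        filter_upwards [hEvalP, hab] with ω hω h
        have h1 : η s ω = a (G ω) := congrFun hηa ω
        have h2 : η t ω = b (G ω) := congrFun hηb ω
        simp only [hf]
        rw [← h1, ← h2, hω _ h.1, hω _ (h.1.trans h.2), hξk]
    _ = ∫ x, f x ∂(μ.prod ν) := by
        rw [← hprod, integral_map hGH.aemeasurable hfm.aestronglyMeasurable]
    _ = ∫ p, ∫ q, f (p, q) ∂ν ∂μ := integral_prod f hfi
    _ = ∫ p, 0 ∂μ := by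
        refine integral_congr_ae ?_
        filter_upwards [hab'] with p hp
        rw [hν, integral_map hHm.aemeasurable]
        · rw [← integral_sq_sub_mul_eq_zero hwt hθ hp.1 hp.2 (hksec p) fun q => hkC (p, q)]
          refine integral_congr_ae ?_
          filter_upwards [hEvalP] with ω hω
          simp only [hf]
          rw [hω _ hp.1, hω _ (hp.1.trans hp.2)]
        · exact (hfm.comp measurable_prodMk_left).aestronglyMeasurable
    _ = 0 := by simp
end
end

section
/- If two disjoint families generate the noise, the SDE on $[s,t]$ has a pathwise unique solution given its value at time $s$: under the boundedness and Lipschitz assumptions on $\alpha$ and $\widetilde\beta$, for each $0\le s\le t$, any two $(\mathcal M_u)_{u\in[s,t]}$-adapted processes $x,y$ satisfying $x(u)=x(s)+\int_s^u(q\nu+\alpha(x^S(v)))d\eta_v+\int_s^u\widetilde\beta(x^S(v))d\widetilde w(\eta_v)+w(u)-w(s)$ with $x(s)=y(s)$ a.s. coincide a.s. on $[s,t]$. -/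
/-!
# Pathwise uniqueness for the restarted equation

Two features drive the proof. The local time `η` is a functional of the path of `w`, and the path of
`wt` is independent of that of `w`. Once the path of `w` is frozen, `ζ u = wt (η u)` is therefore a
Wiener process run along a deterministic clock, and a variable of the enlarged filtration at time
`u` is a functional of `wt` up to the deterministic time `η u` (`exists_frozen`). Fubini's theorem
then transfers the elementary Itô inequality at deterministic times (`ito_deterministic`) to Riemann
sums against `ζ`, even when the squares are weighted by an arbitrary nonnegative functional `φ` of
the path of `w` (`ito_time_changed`).

The additive terms `q ν` and `w u - w s` cancel in `x - y`, which is thus an a.s. limit of differences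
of Riemann sums along a subsequence. If `φ` is carried by `{η t - η s ≤ N}`, the Cauchy–Schwarz
inequality for the drift, the Itô inequality for the martingale part (`energy_step`) and Fatou's
lemma show that the `φ`-weighted second moment of `x u - y u` is at most a constant times any common
bound of the `φ`-weighted Riemann sums of the `energy` of `(x, y)` against `dη`. The Lipschitz
hypothesis bounds the energy by `‖x - y‖ ^ 2`. Since increments of `η` may be absorbed in the weight
`φ`, the estimate can be iterated although the clock `η` is random (`gronwall_iterate`): `m` steps
give a bound `c (C N) ^ m / m!`, which tends to `0`. So `x u = y u` a.s. on `{η t - η s ≤ N}` for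
each `N`, hence a.s.

The ambient space is not assumed finite dimensional, but the existence of `w` forces it
(`finiteDimensional_of_isWiener`); this provides the measurability of continuous functions of pairs
and the constant `finrank ℝ E` in the Itô inequality.
-/

open MeasureTheory ProbabilityTheory Filter
open scoped RealInnerProductSpace

noncomputable section

variable {Ω : Type} [MeasurableSpace Ω]

set_option linter.unusedSectionVars false

/-! ### Finite dimensionality -/

/-- A Wiener process with unit covariance in every direction can only live in a finite-dimensional
space: along an infinite orthonormal sequence the coordinates of `w 1 - w 0` would be standard
Gaussian, yet tend to `0` pointwise by Bessel's inequality. -/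
lemma finiteDimensional_of_isWiener
    {E : Type} [NormedAddCommGroup E] [InnerProductSpace ℝ E] [MeasurableSpace E] [BorelSpace E]
    (P : Measure Ω) [IsProbabilityMeasure P] (w : ℝ → Ω → E) (hw : IsWiener P w) :
    FiniteDimensional ℝ E := by
  by_contra hfd
  have hinf : Infinite (Module.Basis.ofVectorSpaceIndex ℝ E) := by
    by_contra hn
    rw [not_infinite_iff_finite] at hn
    exact hfd (Module.Finite.of_basis (Module.Basis.ofVectorSpace ℝ E))
  have hli : LinearIndependent ℝ (fun n : ℕ => Module.Basis.ofVectorSpace ℝ E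
      (Infinite.natEmbedding (Module.Basis.ofVectorSpaceIndex ℝ E) n)) :=
    (Module.Basis.ofVectorSpace ℝ E).linearIndependent.comp _ (Infinite.natEmbedding _).injective
  have ho := InnerProductSpace.gramSchmidtNormed_orthonormal hli
  set e := InnerProductSpace.gramSchmidtNormed ℝ (fun n : ℕ => Module.Basis.ofVectorSpace ℝ E
      (Infinite.natEmbedding (Module.Basis.ofVectorSpaceIndex ℝ E) n)) with he
  set Z : ℕ → Ω → ℝ := fun n ω => ⟪w 1 ω - w 0 ω, e n⟫ with hZ
  have hlaw : ∀ n, Measure.map (Z n) P = gaussianReal 0 1 := by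
    intro n
    have := hw.incr_law (e n) (ho.1 n) 0 1 le_rfl zero_le_one
    simpa using this
  have hmeas : ∀ n, AEMeasurable (Z n) P := by
    intro n
    apply AEMeasurable.of_map_ne_zero
    rw [hlaw n]
    exact IsProbabilityMeasure.ne_zero _
  have hlim : ∀ ω, Tendsto (fun n => min 1 ((Z n ω)^2)) atTop (nhds 0) := by
    intro ω
    have h1 := (ho.inner_products_summable (w 1 ω - w 0 ω)).tendsto_atTop_zero
    have h2 : Tendsto (fun n => (Z n ω)^2) atTop (nhds 0) := by
      refine h1.congr fun n => ?_
      rw [Real.norm_eq_abs, sq_abs, real_inner_comm]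
    have := (tendsto_const_nhds (x := (1:ℝ))).min h2
    simpa using this
  have hmm : Measurable (fun z : ℝ => min 1 (z^2)) := by fun_prop
  have hI : Tendsto (fun n => ∫ ω, min 1 ((Z n ω)^2) ∂P) atTop (nhds (∫ _, (0:ℝ) ∂P)) := by
    apply tendsto_integral_of_dominated_convergence (fun _ => (1:ℝ))
    · intro n
      exact (hmm.comp_aemeasurable (hmeas n)).aestronglyMeasurable
    · exact integrable_const _
    · intro n
      filter_upwards with ω
      rw [Real.norm_eq_abs, abs_of_nonneg (by positivity)]
      exact min_le_left _ _
    · filter_upwards with ω using hlim ω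
  have hc : ∀ n, ∫ ω, min 1 ((Z n ω)^2) ∂P = ∫ z, min 1 (z^2) ∂(gaussianReal 0 1) := by
    intro n
    rw [← hlaw n, integral_map (hmeas n) hmm.aestronglyMeasurable]
  simp only [hc, integral_zero] at hI
  have h0 := tendsto_nhds_unique hI tendsto_const_nhds
  rw [eq_comm] at h0
  rw [integral_eq_zero_iff_of_nonneg (fun z => by positivity)] at h0
  · have hna : NullSingletonClass (gaussianReal 0 1) := nullSingletonClass_gaussianReal one_ne_zero
    have h2 : ∀ᵐ z ∂(gaussianReal 0 1), z ≠ (0:ℝ) := by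
      rw [ae_iff]; simp
    have h3 : ∀ᵐ z ∂(gaussianReal 0 1), False := by
      filter_upwards [h0, h2] with z hz hz2
      have hp : 0 < min 1 (z^2) := lt_min one_pos (by positivity)
      exact hp.ne' hz
    simp at h3
    exact IsProbabilityMeasure.ne_zero _ h3
  · refine Integrable.of_bound hmm.aestronglyMeasurable 1 ?_
    filter_upwards with z
    rw [Real.norm_eq_abs, abs_of_nonneg (by positivity)]
    exact min_le_left _ _

/-! ### Itô's inequality at deterministic times -/

/-- The past `σ(w u : 0 ≤ u ≤ a)` of a process, as the pullback of the restricted path. -/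
def pastSigma {E : Type} [MeasurableSpace E] (w : ℝ → Ω → E) (a : ℝ) : MeasurableSpace Ω :=
  MeasurableSpace.comap (fun ω (u : Set.Icc (0:ℝ) a) => w u ω) MeasurableSpace.pi

lemma pastSigma_mono {E : Type} [MeasurableSpace E] (w : ℝ → Ω → E) {a b : ℝ} (hab : a ≤ b) :
    pastSigma w a ≤ pastSigma w b := by
  have hm : Measurable (fun (p : Set.Icc (0:ℝ) b → E) (u : Set.Icc (0:ℝ) a) =>
      p ⟨u.1, u.2.1, u.2.2.trans hab⟩) := by
    exact measurable_pi_lambda _ fun u => measurable_pi_apply _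
  rintro _ ⟨t, ht, rfl⟩
  exact ⟨_, hm ht, rfl⟩

lemma pastSigma_le {E : Type} [MeasurableSpace E] (w : ℝ → Ω → E) (hw : ∀ t, Measurable (w t))
    (a : ℝ) : pastSigma w a ≤ (inferInstance : MeasurableSpace Ω) := by
  apply Measurable.comap_le
  exact measurable_pi_lambda _ fun u => hw _

lemma measurable_pastSigma {E : Type} [MeasurableSpace E] (w : ℝ → Ω → E) {a u : ℝ}
    (h0 : 0 ≤ u) (hu : u ≤ a) : Measurable[pastSigma w a] (w u) := by
  intro t ht
  exact ⟨_, (measurable_pi_apply (⟨u, h0, hu⟩ : Set.Icc (0:ℝ) a)) ht, rfl⟩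

section Increments

variable {E : Type} [NormedAddCommGroup E] [InnerProductSpace ℝ E] [MeasurableSpace E]
    [BorelSpace E] [FiniteDimensional ℝ E]

lemma projS_inner_self {ν : E} (hν : ‖ν‖ = 1) (v : E) : ⟪projS ν v, ν⟫ = 0 := by
  unfold projS
  rw [inner_sub_left, inner_smul_left, real_inner_self_eq_norm_sq, hν]; simp

lemma norm_projS_le {ν : E} (hν : ‖ν‖ = 1) (v : E) : ‖projS ν v‖ ≤ ‖v‖ := by
  have h : ‖projS ν v‖ ^ 2 = ‖v‖ ^ 2 - ⟪v, ν⟫ ^ 2 := by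
    unfold projS
    rw [norm_sub_sq_real, norm_smul, hν, inner_smul_right, Real.norm_eq_abs, mul_one, sq_abs]
    ring
  exact le_of_sq_le_sq (by rw [h]; nlinarith [sq_nonneg ⟪v, ν⟫]) (norm_nonneg _)

lemma projS_sub (ν : E) (v v' : E) : projS ν v - projS ν v' = projS ν (v - v') := by
  unfold projS
  rw [inner_sub_left, sub_smul]; abel

lemma continuous_projS (ν : E) : Continuous (projS ν) := by
  unfold projS; fun_prop

variable {P : Measure Ω} [IsProbabilityMeasure P] {ν : E} {wt : ℝ → Ω → E}

/-- Each coordinate of an increment is centered, square integrable, with variance at most the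
length of the time interval. -/
lemma IsWienerIn.coord (hν : ‖ν‖ = 1) (hwt : IsWienerIn P ν wt) (e : E) (he : ‖e‖ = 1)
    {a b : ℝ} (ha : 0 ≤ a) (hab : a ≤ b) :
    MemLp (fun ω => ⟪wt b ω - wt a ω, e⟫) 2 P ∧ ∫ ω, ⟪wt b ω - wt a ω, e⟫ ∂P = 0 ∧
      ∫ ω, ⟪wt b ω - wt a ω, e⟫ ^ 2 ∂P ≤ b - a := by
  have hperp : ∀ ω, ⟪wt b ω - wt a ω, e⟫ = ⟪wt b ω - wt a ω, projS ν e⟫ := by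
    intro ω
    unfold projS
    rw [inner_sub_right, inner_smul_right, inner_sub_left _ _ ν, hwt.mem, hwt.mem]; simp
  simp_rw [hperp]
  set p := projS ν e with hp
  have hpν : ⟪p, ν⟫ = 0 := projS_inner_self hν e
  have hp1 : ‖p‖ ≤ 1 := he ▸ norm_projS_le hν e
  by_cases h0 : p = 0
  · simp [h0, hab]
  have hpn : ‖p‖ ≠ 0 := norm_ne_zero_iff.mpr h0
  set θ := ‖p‖⁻¹ • p with hθ
  have hθ1 : ‖θ‖ = 1 := by rw [hθ, norm_smul, norm_inv, norm_norm, inv_mul_cancel₀ hpn]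
  have hθν : ⟪θ, ν⟫ = 0 := by rw [hθ, inner_smul_left, hpν, mul_zero]
  have hpθ : p = ‖p‖ • θ := by rw [hθ, smul_smul, mul_inv_cancel₀ hpn, one_smul]
  have hlaw := hwt.incr_law θ hθ1 hθν a b ha hab
  have hX : Measurable (fun ω => ⟪wt b ω - wt a ω, θ⟫) := by
    have h1 := hwt.meas b
    have h2 := hwt.meas a
    fun_prop
  set X : Ω → ℝ := fun ω => ⟪wt b ω - wt a ω, θ⟫ with hXdef
  have hpX : ∀ ω, ⟪wt b ω - wt a ω, p⟫ = ‖p‖ * X ω := by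
    intro ω
    conv_lhs => rw [hpθ]
    rw [inner_smul_right]
  simp_rw [hpX]
  have hmem : MemLp X 2 P := by
    have h := memLp_id_gaussianReal (μ := 0) (v := Real.toNNReal (b - a)) 2
    rw [← hlaw, memLp_map_measure_iff aestronglyMeasurable_id hX.aemeasurable] at h
    exact h
  have hmean : ∫ ω, X ω ∂P = 0 := by
    have h := integral_id_gaussianReal (μ := 0) (v := Real.toNNReal (b - a))
    rw [← hlaw] at h
    exact (integral_map hX.aemeasurable aestronglyMeasurable_id).symm.trans h
  have hvar : ∫ ω, X ω ^ 2 ∂P = b - a := by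
    have h := variance_id_gaussianReal (μ := 0) (v := Real.toNNReal (b - a))
    rw [← hlaw, variance_map aemeasurable_id hX.aemeasurable, Function.id_comp,
      variance_of_integral_eq_zero hX.aemeasurable hmean] at h
    rw [h, Real.coe_toNNReal _ (by linarith)]
  refine ⟨hmem.const_mul _, ?_, ?_⟩
  · rw [integral_const_mul, hmean, mul_zero]
  · simp_rw [mul_pow]
    rw [integral_const_mul, hvar]
    have : ‖p‖ ^ 2 ≤ 1 := by nlinarith [norm_nonneg p]
    nlinarith

lemma IsWienerIn.increment_sq (hν : ‖ν‖ = 1) (hwt : IsWienerIn P ν wt)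
    {a b : ℝ} (ha : 0 ≤ a) (hab : a ≤ b) :
    MemLp (fun ω => wt b ω - wt a ω) 2 P ∧
      ∫ ω, ‖wt b ω - wt a ω‖ ^ 2 ∂P ≤ Module.finrank ℝ E * (b - a) := by
  set e := stdOrthonormalBasis ℝ E
  have hc := fun i => hwt.coord hν (e i) (e.orthonormal.1 i) ha hab
  have hsum : ∀ ω, ‖wt b ω - wt a ω‖ ^ 2 = ∑ i, ⟪wt b ω - wt a ω, e i⟫ ^ 2 := by
    intro ω
    rw [← e.sum_sq_norm_inner_right]
    refine Finset.sum_congr rfl fun i _ => ?_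
    rw [Real.norm_eq_abs, sq_abs, real_inner_comm]
  have hint : Integrable (fun ω => ‖wt b ω - wt a ω‖ ^ 2) P := by
    simp_rw [hsum]
    exact integrable_finsetSum _ fun i _ => (hc i).1.integrable_sq
  constructor
  · rw [memLp_two_iff_integrable_sq_norm]
    · exact hint
    · exact ((hwt.meas b).sub (hwt.meas a)).aestronglyMeasurable
  · simp_rw [hsum]
    rw [integral_finsetSum _ fun i _ => (hc i).1.integrable_sq]
    calc _ ≤ ∑ _i : Fin (Module.finrank ℝ E), (b - a) := Finset.sum_le_sum fun i _ => (hc i).2.2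
      _ = _ := by rw [Finset.sum_const, Finset.card_univ, Fintype.card_fin, nsmul_eq_mul]

/-- Quantities measurable with respect to the past are independent of the next increment. -/
lemma IsWienerIn.indep_past (hwt : IsWienerIn P ν wt) {a b : ℝ} (ha : 0 ≤ a) (hab : a ≤ b)
    {F : Type*} [MeasurableSpace F] {X : Ω → F} (hX : Measurable[pastSigma wt a] X) :
    IndepFun X (fun ω => wt b ω - wt a ω) P := by
  have h := hwt.incr_indep a b ha hab
  rw [IndepFun_iff_Indep] at h ⊢
  exact (indep_of_indep_of_le_right h hX.comap_le).symm

/-- Itô's inequality for a simple integrand and deterministic times: the stochastic integral is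
bounded in mean square because each summand is orthogonal to the preceding partial sum. -/
lemma ito_deterministic (hν : ‖ν‖ = 1) (hwt : IsWienerIn P ν wt)
    (a : ℕ → ℝ) (ha0 : 0 ≤ a 0) (ha : Monotone a) (L : ℕ → Ω → E →L[ℝ] E) (c : ℝ)
    (hL : ∀ k, Measurable[pastSigma wt (a k)] (L k)) (hc : ∀ k ω, ‖L k ω‖ ≤ c) (n : ℕ) :
    Measurable[pastSigma wt (a n)]
      (fun ω => ∑ k ∈ Finset.range n, L k ω (wt (a (k+1)) ω - wt (a k) ω)) ∧
    MemLp (fun ω => ∑ k ∈ Finset.range n, L k ω (wt (a (k+1)) ω - wt (a k) ω)) 2 P ∧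
    ∫ ω, ‖∑ k ∈ Finset.range n, L k ω (wt (a (k+1)) ω - wt (a k) ω)‖ ^ 2 ∂P ≤
      ∑ k ∈ Finset.range n,
        Module.finrank ℝ E * (a (k+1) - a k) * ∫ ω, ‖L k ω‖ ^ 2 ∂P := by
  have hpos : ∀ k, 0 ≤ a k := fun k => ha0.trans (ha (Nat.zero_le k))
  induction n with
  | zero => simp
  | succ n ih =>
    obtain ⟨ihm, ihL, ihb⟩ := ih
    simp_rw [Finset.sum_range_succ]
    set S : Ω → E := fun ω => ∑ k ∈ Finset.range n, L k ω (wt (a (k+1)) ω - wt (a k) ω) with hS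
    set Δ : Ω → E := fun ω => wt (a (n+1)) ω - wt (a n) ω with hΔ
    have hstep : a n ≤ a (n+1) := ha (Nat.le_succ n)
    have hLm : Measurable (L n) := (hL n).mono (pastSigma_le wt hwt.meas _) le_rfl
    have hΔm : Measurable Δ := (hwt.meas _).sub (hwt.meas _)
    have hSm : Measurable S := ihm.mono (pastSigma_le wt hwt.meas _) le_rfl
    have happ : Continuous fun p : (E →L[ℝ] E) × E => p.1 p.2 := by fun_prop
    have hLΔm : Measurable fun ω => L n ω (Δ ω) := happ.measurable.comp (hLm.prodMk hΔm)
    obtain ⟨hΔL, hΔb⟩ := hwt.increment_sq hν (hpos n) hstep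
    have hLΔ : MemLp (fun ω => L n ω (Δ ω)) 2 P := by
      refine MemLp.of_le_mul (c := c) hΔL hLΔm.aestronglyMeasurable ?_
      filter_upwards with ω
      exact ((L n ω).le_opNorm _).trans (mul_le_mul_of_nonneg_right (hc n ω) (norm_nonneg _))
    refine ⟨?_, ihL.add hLΔ, ?_⟩
    · have h1 : Measurable[pastSigma wt (a (n+1))] S := ihm.mono (pastSigma_mono wt hstep) le_rfl
      have h2 : Measurable[pastSigma wt (a (n+1))] (L n) :=
        (hL n).mono (pastSigma_mono wt hstep) le_rfl
      have h5 : Measurable[pastSigma wt (a (n+1))] (wt (a (n+1))) :=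
        measurable_pastSigma wt (hpos _) le_rfl
      have h6 : Measurable[pastSigma wt (a (n+1))] (wt (a n)) :=
        measurable_pastSigma wt (hpos _) hstep
      have h3 : Measurable[pastSigma wt (a (n+1))] Δ := h5.sub h6
      have h4 : Measurable[pastSigma wt (a (n+1))] (fun ω => L n ω (Δ ω)) :=
        happ.measurable.comp (Measurable.prodMk h2 h3)
      exact h1.add h4
    · -- the cross term vanishes coordinate by coordinate
      have hcross : Integrable (fun ω => ⟪S ω, L n ω (Δ ω)⟫) P ∧
          ∫ ω, ⟪S ω, L n ω (Δ ω)⟫ ∂P = 0 := by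
        set e := stdOrthonormalBasis ℝ E
        have hexp : ∀ ω, ⟪S ω, L n ω (Δ ω)⟫ = ∑ i, ⟪S ω, L n ω (e i)⟫ * ⟪Δ ω, e i⟫ := by
          intro ω
          conv_lhs => rw [← e.sum_repr' (Δ ω)]
          rw [map_sum, inner_sum]
          refine Finset.sum_congr rfl fun i _ => ?_
          rw [map_smul, inner_smul_right, real_inner_comm, mul_comm]
        have hLe : ∀ i, Measurable[pastSigma wt (a n)] (fun ω => ⟪S ω, L n ω (e i)⟫) := by
          intro i
          have hci : Continuous fun p : E × (E →L[ℝ] E) => ⟪p.1, p.2 (e i)⟫ := by fun_prop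
          exact hci.measurable.comp (Measurable.prodMk ihm (hL n))
        have hind : ∀ i, IndepFun (fun ω => ⟪S ω, L n ω (e i)⟫) (fun ω => ⟪Δ ω, e i⟫) P := by
          intro i
          exact (hwt.indep_past (hpos n) hstep (hLe i)).comp measurable_id
            (by fun_prop : Measurable fun v : E => ⟪v, e i⟫)
        have hcoord := fun i => hwt.coord hν (e i) (e.orthonormal.1 i) (hpos n) hstep
        have hiS : ∀ i, Integrable (fun ω => ⟪S ω, L n ω (e i)⟫) P := by
          intro i
          refine Integrable.mono' ((ihL.integrable one_le_two).norm.mul_const c)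
            ((hLe i).mono (pastSigma_le wt hwt.meas _) le_rfl).aestronglyMeasurable ?_
          filter_upwards with ω
          refine (norm_inner_le_norm _ _).trans ?_
          refine mul_le_mul_of_nonneg_left ?_ (norm_nonneg _)
          refine ((L n ω).le_opNorm _).trans ?_
          rw [e.orthonormal.1 i, mul_one]; exact hc n ω
        have hiΔ : ∀ i, Integrable (fun ω => ⟪Δ ω, e i⟫) P :=
          fun i => (hcoord i).1.integrable one_le_two
        have hii : ∀ i, Integrable (fun ω => ⟪S ω, L n ω (e i)⟫ * ⟪Δ ω, e i⟫) P :=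
          fun i => (hind i).integrable_mul (hiS i) (hiΔ i)
        simp_rw [hexp]
        refine ⟨integrable_finsetSum _ fun i _ => hii i, ?_⟩
        rw [integral_finsetSum _ fun i _ => hii i]
        refine Finset.sum_eq_zero fun i _ => ?_
        rw [(hind i).integral_fun_mul_eq_mul_integral (hiS i).1 (hiΔ i).1, (hcoord i).2.1, mul_zero]
      have hdiag : ∫ ω, ‖L n ω (Δ ω)‖ ^ 2 ∂P ≤
          Module.finrank ℝ E * (a (n+1) - a n) * ∫ ω, ‖L n ω‖ ^ 2 ∂P := by
        have hi2 : IndepFun (fun ω => ‖L n ω‖ ^ 2) (fun ω => ‖Δ ω‖ ^ 2) P :=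
          (hwt.indep_past (hpos n) hstep (hL n)).comp
            (by fun_prop : Measurable fun l : E →L[ℝ] E => ‖l‖ ^ 2)
            (by fun_prop : Measurable fun v : E => ‖v‖ ^ 2)
        have hi1 : Integrable (fun ω => ‖L n ω‖ ^ 2) P := by
          refine Integrable.of_bound (by fun_prop) (c ^ 2) ?_
          filter_upwards with ω
          rw [Real.norm_eq_abs, abs_of_nonneg (by positivity)]
          exact pow_le_pow_left₀ (norm_nonneg _) (hc n ω) 2
        have hi3 : Integrable (fun ω => ‖Δ ω‖ ^ 2) P := hΔL.integrable_norm_pow two_ne_zero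
        calc ∫ ω, ‖L n ω (Δ ω)‖ ^ 2 ∂P ≤ ∫ ω, ‖L n ω‖ ^ 2 * ‖Δ ω‖ ^ 2 ∂P := by
              refine integral_mono (hLΔ.integrable_norm_pow two_ne_zero)
                (hi2.integrable_mul hi1 hi3) fun ω => ?_
              simp only
              rw [← mul_pow]
              exact pow_le_pow_left₀ (norm_nonneg _) ((L n ω).le_opNorm _) 2
          _ = (∫ ω, ‖L n ω‖ ^ 2 ∂P) * ∫ ω, ‖Δ ω‖ ^ 2 ∂P :=
              hi2.integral_fun_mul_eq_mul_integral hi1.1 hi3.1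
          _ ≤ (∫ ω, ‖L n ω‖ ^ 2 ∂P) * (Module.finrank ℝ E * (a (n+1) - a n)) :=
              mul_le_mul_of_nonneg_left hΔb (integral_nonneg fun ω => by positivity)
          _ = _ := by ring
      have hexpand : ∀ ω, ‖S ω + L n ω (Δ ω)‖ ^ 2 =
          ‖S ω‖ ^ 2 + 2 * ⟪S ω, L n ω (Δ ω)⟫ + ‖L n ω (Δ ω)‖ ^ 2 :=
        fun ω => norm_add_sq_real _ _
      have hSS : Integrable (fun ω => ‖S ω‖ ^ 2) P := ihL.integrable_norm_pow two_ne_zero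
      have hLL : Integrable (fun ω => ‖L n ω (Δ ω)‖ ^ 2) P :=
        hLΔ.integrable_norm_pow two_ne_zero
      have h2c := hcross.1.const_mul 2
      calc ∫ ω, ‖S ω + L n ω (Δ ω)‖ ^ 2 ∂P
          = ∫ ω, (‖S ω‖ ^ 2 + 2 * ⟪S ω, L n ω (Δ ω)⟫ + ‖L n ω (Δ ω)‖ ^ 2) ∂P :=
            integral_congr_ae (Eventually.of_forall hexpand)
        _ = ∫ ω, ‖S ω‖ ^ 2 ∂P + ∫ ω, ‖L n ω (Δ ω)‖ ^ 2 ∂P := by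
            rw [integral_add (f := fun ω => ‖S ω‖ ^ 2 + 2 * ⟪S ω, L n ω (Δ ω)⟫) (hSS.add h2c) hLL,
              integral_add hSS h2c, integral_const_mul,
              hcross.2]
            ring
        _ ≤ _ := add_le_add ihb hdiag

end Increments

/-! ### Freezing the path of `w` -/

section Freeze

variable {E : Type} [NormedAddCommGroup E] [InnerProductSpace ℝ E] [MeasurableSpace E]
    [BorelSpace E] [FiniteDimensional ℝ E]
variable {P : Measure Ω} [IsProbabilityMeasure P] {ν : E} {w wt : ℝ → Ω → E}

/-- Fubini's theorem for functionals of the two independent paths. -/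
lemma lintegral_indepProc (hw : ∀ t, Measurable (w t)) (hwt : ∀ t, Measurable (wt t))
    (hind : IndepProc P w wt) (F : (ℝ → E) × (ℝ → E) → ENNReal) (hF : Measurable F) :
    ∫⁻ ω, F (fun t => w t ω, fun t => wt t ω) ∂P =
      ∫⁻ ω, ∫⁻ ω', F (fun t => w t ω, fun t => wt t ω') ∂P ∂P := by
  have h1 : Measurable (fun ω (t : ℝ) => w t ω) := measurable_pi_lambda _ hw
  have h2 : Measurable (fun ω (t : ℝ) => wt t ω) := measurable_pi_lambda _ hwt
  have hmap := (indepFun_iff_map_prod_eq_prod_map_map h1.aemeasurable h2.aemeasurable).mp hind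
  have : IsProbabilityMeasure (P.map (fun ω (t : ℝ) => wt t ω)) :=
    Measure.isProbabilityMeasure_map h2.aemeasurable
  rw [← lintegral_map hF (h1.prodMk h2), hmap, lintegral_prod _ hF.aemeasurable,
    lintegral_map hF.lintegral_prod_right' h1]
  refine lintegral_congr fun ω => ?_
  exact lintegral_map (hF.comp measurable_prodMk_left) h2

/-- A variable measurable for the enlarged filtration at time `u` is a functional of the two paths
which, once the path `p` of `w` is frozen, only looks at `wt` before the (now deterministic) time
`h p`, the value of `η u` along `p`. -/
lemma exists_frozen {η : ℝ → Ω → ℝ} {u : ℝ} {f : Ω → E}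
    (hf : Measurable[MFilt w wt η u] f) (h : (ℝ → E) → ℝ) (hh : Measurable h)
    (hηu : ∀ ω, η u ω = h (fun t => w t ω)) :
    ∃ f' : (ℝ → E) × (ℝ → E) → E, Measurable f' ∧
      (∀ ω, f ω = f' (fun t => w t ω, fun t => wt t ω)) ∧
      ∀ p : ℝ → E, Measurable[pastSigma wt (h p)] (fun ω => f' (p, fun t => wt t ω)) := by
  let S : Set (Set ((ℝ → E) × (ℝ → E))) := {A | ∃ s : ℝ, 0 ≤ s ∧ ∃ Γ : Set E,
    MeasurableSet Γ ∧ A = {q | q.2 s ∈ Γ ∧ s ≤ h q.1}}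
  let G : MeasurableSpace ((ℝ → E) × (ℝ → E)) :=
    MeasurableSpace.comap Prod.fst MeasurableSpace.pi ⊔ MeasurableSpace.generateFrom S
  let Ψ : Ω → (ℝ → E) × (ℝ → E) := fun ω => (fun t => w t ω, fun t => wt t ω)
  have hle : MFilt w wt η u ≤ MeasurableSpace.comap Ψ G := by
    refine sup_le ?_ ?_
    · refine iSup₂_le fun r _ => ?_
      rintro _ ⟨Γ, hΓ, rfl⟩
      refine ⟨Prod.fst ⁻¹' ((fun p : ℝ → E => p r) ⁻¹' Γ), ?_, rfl⟩
      have h1 : MeasurableSpace.comap Prod.fst MeasurableSpace.pi ≤ G := le_sup_left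
      exact h1 _ ⟨_, measurable_pi_apply r hΓ, rfl⟩
    · refine MeasurableSpace.generateFrom_le ?_
      rintro _ ⟨r, hr, Γ, hΓ, rfl⟩
      refine ⟨{q | q.2 r ∈ Γ ∧ r ≤ h q.1}, ?_, ?_⟩
      · have h1 : MeasurableSpace.generateFrom S ≤ G := le_sup_right
        exact h1 _ (MeasurableSpace.measurableSet_generateFrom ⟨r, hr, Γ, hΓ, rfl⟩)
      · ext ω
        simp [Ψ, hηu]
  have hf2 : Measurable[MeasurableSpace.comap Ψ G] f := hf.mono hle le_rfl
  obtain ⟨f', hf', hff⟩ := hf2.exists_eq_measurable_comp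
  have hG : G ≤ Prod.instMeasurableSpace := by
    refine sup_le (measurable_fst.comap_le) (MeasurableSpace.generateFrom_le ?_)
    rintro _ ⟨r, hr, Γ, hΓ, rfl⟩
    exact (((measurable_pi_apply r).comp measurable_snd) hΓ).inter
      (measurableSet_le measurable_const (hh.comp measurable_fst))
  refine ⟨f', hf'.mono hG le_rfl, fun ω => congrFun hff ω, fun p => ?_⟩
  have hsec : Measurable[pastSigma wt (h p), G]
      (fun ω => ((p, fun t => wt t ω) : (ℝ → E) × (ℝ → E))) := by
    refine Measurable.of_comap_le ?_
    rw [MeasurableSpace.comap_sup]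
    refine sup_le ?_ ?_
    · rintro _ ⟨_, ⟨A, hA, rfl⟩, rfl⟩
      by_cases hp : p ∈ A
      · convert @MeasurableSet.univ _ (pastSigma wt (h p)) using 1
        ext ω; simp [hp]
      · convert @MeasurableSet.empty _ (pastSigma wt (h p)) using 1
        ext ω; simp [hp]
    · rw [MeasurableSpace.comap_generateFrom]
      refine MeasurableSpace.generateFrom_le ?_
      rintro _ ⟨_, ⟨r, hr, Γ, hΓ, rfl⟩, rfl⟩
      by_cases hrp : r ≤ h p
      · convert measurable_pastSigma wt hr hrp hΓ using 1
        ext ω; simp [hrp]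
      · convert @MeasurableSet.empty _ (pastSigma wt (h p)) using 1
        ext ω; simp [hrp]
  exact hf'.comp hsec

/-- Itô's inequality for the time-changed process `wt (η u)`, weighted by a functional `φ` of the
path of `w`. Conditionally on that path the times `h k` are deterministic, so
`ito_deterministic` applies. -/
lemma ito_time_changed (hν : ‖ν‖ = 1) (hw : ∀ t, Measurable (w t)) (hwt : IsWienerIn P ν wt)
    (hind : IndepProc P w wt) (h : ℕ → (ℝ → E) → ℝ) (hh : ∀ k, Measurable (h k))
    (hmono : ∀ᵐ ω ∂P, 0 ≤ h 0 (fun t => w t ω) ∧ Monotone fun k => h k (fun t => w t ω))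
    (L : ℕ → (ℝ → E) × (ℝ → E) → E →L[ℝ] E) (c : ℝ) (hL : ∀ k, Measurable (L k))
    (hc : ∀ k q, ‖L k q‖ ≤ c)
    (hLs : ∀ k p, Measurable[pastSigma wt (h k p)] (fun ω => L k (p, fun t => wt t ω)))
    (φ : (ℝ → E) → ENNReal) (hφ : Measurable φ) (n : ℕ) :
    ∫⁻ ω, φ (fun t => w t ω) * ENNReal.ofReal (‖∑ k ∈ Finset.range n,
        L k (fun t => w t ω, fun t => wt t ω)
          (wt (h (k+1) (fun t => w t ω)) ω - wt (h k (fun t => w t ω)) ω)‖ ^ 2) ∂P ≤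
      ∫⁻ ω, φ (fun t => w t ω) * ∑ k ∈ Finset.range n,
        ENNReal.ofReal (Module.finrank ℝ E *
          (h (k+1) (fun t => w t ω) - h k (fun t => w t ω))) *
        ENNReal.ofReal (‖L k (fun t => w t ω, fun t => wt t ω)‖ ^ 2) ∂P := by
  -- evaluation at a random time is approximated by evaluations at grid times
  let ev : ℕ → (ℝ → E) × ℝ → E := fun m z => z.1 ((⌊z.2 * (m:ℝ)⌋₊ : ℝ) / m)
  have hev : ∀ m, Measurable (ev m) := by
    intro m
    have h1 : Measurable (fun z : (ℝ → E) × ℕ => z.1 ((z.2 : ℝ) / m)) :=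
      measurable_from_prod_countable_left fun j => measurable_pi_apply ((j : ℝ) / (m : ℝ))
    have h2 : Measurable (fun z : (ℝ → E) × ℝ => (z.1, ⌊z.2 * (m:ℝ)⌋₊)) := by
      fun_prop
    exact h1.comp h2
  have hevlim : ∀ (p : ℝ → E) (r : ℝ), Continuous p → 0 ≤ r →
      Tendsto (fun m => ev m (p, r)) atTop (nhds (p r)) := by
    intro p r hp hr
    exact (hp.tendsto r).comp
      ((tendsto_nat_floor_mul_div_atTop hr).comp tendsto_natCast_atTop_atTop)
  let G : ℕ → (ℝ → E) × (ℝ → E) → ENNReal := fun m q => ENNReal.ofReal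
    (‖∑ k ∈ Finset.range n, L k q (ev m (q.2, h (k+1) q.1) - ev m (q.2, h k q.1))‖ ^ 2)
  have happ : Continuous fun p : (E →L[ℝ] E) × E => p.1 p.2 := by fun_prop
  have hG : ∀ m, Measurable (G m) := by
    intro m
    have h1 : ∀ k, Measurable (fun q : (ℝ → E) × (ℝ → E) => ev m (q.2, h k q.1)) :=
      fun k => (hev m).comp (measurable_snd.prodMk ((hh k).comp measurable_fst))
    have h2 : Measurable (fun q : (ℝ → E) × (ℝ → E) => ∑ k ∈ Finset.range n,
        L k q (ev m (q.2, h (k+1) q.1) - ev m (q.2, h k q.1))) :=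
      Finset.measurable_fun_sum _ fun k _ =>
        happ.measurable.comp ((hL k).prodMk ((h1 (k+1)).sub (h1 k)))
    exact (h2.norm.pow_const 2).ennreal_ofReal
  let GI : (ℝ → E) × (ℝ → E) → ENNReal := fun q => liminf (fun m => G m q) atTop
  have hGI : Measurable GI := Measurable.liminf hG
  have hGI_eq : ∀ q : (ℝ → E) × (ℝ → E), Continuous q.2 → (∀ k, 0 ≤ h k q.1) →
      GI q = ENNReal.ofReal (‖∑ k ∈ Finset.range n,
        L k q (q.2 (h (k+1) q.1) - q.2 (h k q.1))‖ ^ 2) := by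
    intro q hq hpos
    refine Tendsto.liminf_eq ?_
    refine ENNReal.tendsto_ofReal (Tendsto.pow (Tendsto.norm ?_) 2)
    refine tendsto_finsetSum _ fun k _ => ?_
    exact ((L k q).continuous.tendsto _).comp
      ((hevlim _ _ hq (hpos _)).sub (hevlim _ _ hq (hpos _)))
  have hF2 : Measurable (fun q : (ℝ → E) × (ℝ → E) => φ q.1 * ∑ k ∈ Finset.range n,
        ENNReal.ofReal (Module.finrank ℝ E * (h (k+1) q.1 - h k q.1)) *
        ENNReal.ofReal (‖L k q‖ ^ 2)) := by
    refine (hφ.comp measurable_fst).mul (Finset.measurable_fun_sum _ fun k _ => ?_)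
    have h1 : Measurable (fun q : (ℝ → E) × (ℝ → E) => h (k+1) q.1) :=
      (hh (k+1)).comp measurable_fst
    have h2 : Measurable (fun q : (ℝ → E) × (ℝ → E) => h k q.1) := (hh k).comp measurable_fst
    exact (((h1.sub h2).const_mul _).ennreal_ofReal).mul
      (((hL k).norm.pow_const 2).ennreal_ofReal)
  rw [lintegral_indepProc hw hwt.meas hind _ hF2]
  calc _ = ∫⁻ ω, (fun q : (ℝ → E) × (ℝ → E) => φ q.1 * GI q)
          (fun t => w t ω, fun t => wt t ω) ∂P := by
        refine lintegral_congr_ae ?_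
        filter_upwards [hwt.cont, hmono] with ω hω hm
        rw [hGI_eq _ hω fun k => hm.1.trans (hm.2 (Nat.zero_le k))]
    _ = ∫⁻ ω, ∫⁻ ω', φ (fun t => w t ω) * GI (fun t => w t ω, fun t => wt t ω') ∂P ∂P :=
        lintegral_indepProc hw hwt.meas hind (fun q => φ q.1 * GI q) ((hφ.comp measurable_fst).mul hGI)
    _ ≤ _ := by
        refine lintegral_mono_ae ?_
        filter_upwards [hmono] with ω hm
        set p : ℝ → E := fun t => w t ω with hp
        have hL0 : ∀ k, Measurable (fun ω' => L k (p, fun t => wt t ω')) := fun k =>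
          (hLs k p).mono (pastSigma_le wt hwt.meas _) le_rfl
        obtain ⟨-, hI1, hI2⟩ := ito_deterministic hν hwt (fun k => h k p) hm.1 hm.2
          (fun k ω' => L k (p, fun t => wt t ω')) c (fun k => hLs k p)
          (fun k ω' => hc k _) n
        have hLi : ∀ k, Integrable (fun ω' => ‖L k (p, fun t => wt t ω')‖ ^ 2) P := by
          intro k
          refine Integrable.of_bound ((hL0 k).norm.pow_const 2).aestronglyMeasurable (c ^ 2) ?_
          filter_upwards with ω'
          rw [Real.norm_eq_abs, abs_of_nonneg (by positivity)]
          exact pow_le_pow_left₀ (norm_nonneg _) (hc k _) 2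
        have hΔ : ∀ k, 0 ≤ (Module.finrank ℝ E : ℝ) * (h (k+1) p - h k p) := fun k =>
          mul_nonneg (Nat.cast_nonneg _) (sub_nonneg.mpr (hm.2 (Nat.le_succ k)))
        have hGp : Measurable (fun ω' => GI (p, fun t => wt t ω')) :=
          hGI.comp (measurable_const.prodMk (measurable_pi_lambda _ hwt.meas))
        rw [lintegral_const_mul _ hGp, lintegral_const_mul]
        · refine mul_le_mul_right ?_ _
          calc ∫⁻ ω', GI (p, fun t => wt t ω') ∂P
              = ∫⁻ ω', ENNReal.ofReal (‖∑ k ∈ Finset.range n, L k (p, fun t => wt t ω')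
                  (wt (h (k+1) p) ω' - wt (h k p) ω')‖ ^ 2) ∂P := by
                refine lintegral_congr_ae ?_
                filter_upwards [hwt.cont] with ω' hω'
                exact hGI_eq _ hω' fun k => hm.1.trans (hm.2 (Nat.zero_le k))
            _ = ENNReal.ofReal (∫ ω', ‖∑ k ∈ Finset.range n, L k (p, fun t => wt t ω')
                  (wt (h (k+1) p) ω' - wt (h k p) ω')‖ ^ 2 ∂P) := by
                rw [ofReal_integral_eq_lintegral_ofReal (hI1.integrable_norm_pow two_ne_zero)]
                exact Eventually.of_forall fun ω' => by positivity
            _ ≤ ENNReal.ofReal (∑ k ∈ Finset.range n, Module.finrank ℝ E *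
                  (h (k+1) p - h k p) * ∫ ω', ‖L k (p, fun t => wt t ω')‖ ^ 2 ∂P) :=
                ENNReal.ofReal_le_ofReal hI2
            _ = ∑ k ∈ Finset.range n, ENNReal.ofReal (Module.finrank ℝ E *
                  (h (k+1) p - h k p)) *
                  ∫⁻ ω', ENNReal.ofReal (‖L k (p, fun t => wt t ω')‖ ^ 2) ∂P := by
                rw [ENNReal.ofReal_sum_of_nonneg]
                · refine Finset.sum_congr rfl fun k _ => ?_
                  rw [ENNReal.ofReal_mul (hΔ k), ofReal_integral_eq_lintegral_ofReal (hLi k)]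
                  exact Eventually.of_forall fun ω' => by positivity
                · intro k _
                  exact mul_nonneg (hΔ k) (integral_nonneg fun ω' => by positivity)
            _ = _ := by
                rw [lintegral_finsetSum]
                · refine Finset.sum_congr rfl fun k _ => ?_
                  rw [lintegral_const_mul _ (((hL0 k).norm.pow_const 2).ennreal_ofReal)]
                · intro k _
                  exact (((hL0 k).norm.pow_const 2).ennreal_ofReal).const_mul _
        · refine Finset.measurable_fun_sum _ fun k _ => ?_
          exact (((hL0 k).norm.pow_const 2).ennreal_ofReal).const_mul _

end Freeze

/-! ### The energy estimate for Riemann sums -/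

/-- The squared distance between the coefficients of the equation at the points `v` and `v'`. -/
def energy {E : Type} [NormedAddCommGroup E] [InnerProductSpace ℝ E] (ν : E)
    (α : E → E) (βt : E → E →L[ℝ] E)
    (v v' : E) : ℝ :=
  ‖α (projS ν v) - α (projS ν v')‖ ^ 2 + ‖βt (projS ν v) - βt (projS ν v')‖ ^ 2

section Energy

variable {E : Type} [NormedAddCommGroup E] [InnerProductSpace ℝ E] [MeasurableSpace E]
    [BorelSpace E] [FiniteDimensional ℝ E]

lemma energy_nonneg (ν : E) (α : E → E) (βt : E → E →L[ℝ] E) (v v' : E) :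
    0 ≤ energy ν α βt v v' := by
  unfold energy; positivity

lemma energy_le_dist {ν : E} (hν : ‖ν‖ = 1) {α : E → E} {βt : E → E →L[ℝ] E} {K : ℝ} (hK : 0 < K)
    (hlip : ∀ v v' : E, ⟪v, ν⟫ = 0 → ⟪v', ν⟫ = 0 →
      ‖α v - α v'‖ ^ 2 + ‖βt v - βt v'‖ ^ 2 ≤ K * ‖v - v'‖ ^ 2) (v v' : E) :
    energy ν α βt v v' ≤ K * ‖v - v'‖ ^ 2 := by
  refine (hlip _ _ (projS_inner_self hν v) (projS_inner_self hν v')).trans ?_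
  rw [projS_sub]
  have := norm_projS_le hν (v - v')
  gcongr

lemma energy_le_const {ν : E} (hν : ‖ν‖ = 1) {α : E → E} {βt : E → E →L[ℝ] E} {K : ℝ}
    (hbd : ∀ v : E, ⟪v, ν⟫ = 0 → ‖α v‖ + ‖βt v‖ ≤ K) (v v' : E) :
    energy ν α βt v v' ≤ 8 * K ^ 2 := by
  have h1 := hbd _ (projS_inner_self hν v)
  have h2 := hbd _ (projS_inner_self hν v')
  have ha : ‖α (projS ν v) - α (projS ν v')‖ ≤ 2 * K := by
    have := norm_sub_le (α (projS ν v)) (α (projS ν v'))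
    linarith [norm_nonneg (βt (projS ν v)), norm_nonneg (βt (projS ν v'))]
  have hb : ‖βt (projS ν v) - βt (projS ν v')‖ ≤ 2 * K := by
    have := norm_sub_le (βt (projS ν v)) (βt (projS ν v'))
    linarith [norm_nonneg (α (projS ν v)), norm_nonneg (α (projS ν v'))]
  have ha2 := pow_le_pow_left₀ (norm_nonneg _) ha 2
  have hb2 := pow_le_pow_left₀ (norm_nonneg _) hb 2
  unfold energy
  linarith

/-- A map satisfying a squared Lipschitz estimate is continuous. -/
lemma continuous_of_sq_lip {X Y : Type} [NormedAddCommGroup X] [NormedAddCommGroup Y] {f : X → Y}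
    {K : ℝ} (hK : 0 < K) (h : ∀ v v', ‖f v - f v'‖ ^ 2 ≤ K * ‖v - v'‖ ^ 2) : Continuous f := by
  refine LipschitzWith.continuous (K := ⟨Real.sqrt K, Real.sqrt_nonneg K⟩)
    (LipschitzWith.of_dist_le_mul fun v v' => ?_)
  rw [dist_eq_norm, dist_eq_norm]
  refine abs_le_of_sq_le_sq' ?_ (mul_nonneg (Real.sqrt_nonneg K) (norm_nonneg _)) |>.2
  refine (h v v').trans_eq ?_
  rw [mul_pow]
  congr 1
  exact (Real.sq_sqrt hK.le).symm

lemma continuous_coeff {ν : E} (hν : ‖ν‖ = 1) {α : E → E} {βt : E → E →L[ℝ] E} {K : ℝ}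
    (hK : 0 < K)
    (hlip : ∀ v v' : E, ⟪v, ν⟫ = 0 → ⟪v', ν⟫ = 0 →
      ‖α v - α v'‖ ^ 2 + ‖βt v - βt v'‖ ^ 2 ≤ K * ‖v - v'‖ ^ 2) :
    Continuous (fun v => α (projS ν v)) ∧ Continuous (fun v => βt (projS ν v)) := by
  constructor <;> refine continuous_of_sq_lip hK fun v v' => ?_
  · exact (le_add_of_nonneg_right (by positivity)).trans (energy_le_dist hν hK hlip v v')
  · exact (le_add_of_nonneg_left (by positivity)).trans (energy_le_dist hν hK hlip v v')

/-- The Cauchy–Schwarz inequality for a weighted sum of vectors. -/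
lemma norm_sum_smul_sq_le (n : ℕ) (r : ℕ → ℝ) (a : ℕ → E) (hr : ∀ k, 0 ≤ r k) :
    ‖∑ k ∈ Finset.range n, r k • a k‖ ^ 2 ≤
      (∑ k ∈ Finset.range n, r k) * ∑ k ∈ Finset.range n, r k * ‖a k‖ ^ 2 := by
  have h1 : ‖∑ k ∈ Finset.range n, r k • a k‖ ≤ ∑ k ∈ Finset.range n, r k * ‖a k‖ := by
    refine (norm_sum_le _ _).trans_eq (Finset.sum_congr rfl fun k _ => ?_)
    rw [norm_smul, Real.norm_eq_abs, abs_of_nonneg (hr k)]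
  refine (pow_le_pow_left₀ (norm_nonneg _) h1 2).trans ?_
  refine Finset.sum_sq_le_sum_mul_sum_of_sq_le_mul _ (fun k _ => hr k)
    (fun k _ => mul_nonneg (hr k) (by positivity)) fun k _ => le_of_eq ?_
  ring

variable {P : Measure Ω} [IsProbabilityMeasure P] {ν : E} {w wt : ℝ → Ω → E} {η : ℝ → Ω → ℝ}

/-- The second moment of the difference of two Riemann sums of the equation, weighted by a
functional `φ` of the path of `w` carried by `{η (τ n) - η (τ 0) ≤ N}`, is controlled by the
Riemann sum of the energy against `dη`: the drift part by the Cauchy–Schwarz inequality, the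
martingale part by Itô's inequality. -/
lemma energy_step (hν : ‖ν‖ = 1) (hw : ∀ t, Measurable (w t)) (hwt : IsWienerIn P ν wt)
    (hind : IndepProc P w wt) (H : ℝ → (ℝ → E) → ℝ) (hH : ∀ u, Measurable (H u))
    (hηH : ∀ u, 0 ≤ u → ∀ ω, η u ω = H u (fun t => w t ω))
    (hηmono : ∀ᵐ ω ∂P, Monotone fun u => η u ω) (hη0 : ∀ᵐ ω ∂P, η 0 ω = 0)
    {α : E → E} {βt : E → E →L[ℝ] E} (hα : Continuous (fun v => α (projS ν v)))
    (hβ : Continuous (fun v => βt (projS ν v))) (c : ℝ) (hβc : ∀ v, ‖βt (projS ν v)‖ ≤ c)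
    {s : ℝ} (hs : 0 ≤ s) {x y : ℝ → Ω → E}
    (hx : ∀ u, s ≤ u → Measurable[MFilt w wt η u] (x u))
    (hy : ∀ u, s ≤ u → Measurable[MFilt w wt η u] (y u))
    (τ : ℕ → ℝ) (hτ : Monotone τ) (hτs : ∀ k, s ≤ τ k) (n : ℕ)
    (φ : (ℝ → E) → ENNReal) (hφ : Measurable φ) (N : ℝ) (hN : 0 ≤ N)
    (hφN : ∀ᵐ ω ∂P, φ (fun t => w t ω) ≠ 0 → η (τ n) ω - η (τ 0) ω ≤ N) :
    ∫⁻ ω, φ (fun t => w t ω) * ENNReal.ofReal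
      (‖(∑ k ∈ Finset.range n, (η (τ (k+1)) ω - η (τ k) ω) •
          (α (projS ν (x (τ k) ω)) - α (projS ν (y (τ k) ω)))) +
        ∑ k ∈ Finset.range n, (βt (projS ν (x (τ k) ω)) - βt (projS ν (y (τ k) ω)))
          (wt (η (τ (k+1)) ω) ω - wt (η (τ k) ω) ω)‖ ^ 2) ∂P ≤
    ENNReal.ofReal (2 * N + 2 * Module.finrank ℝ E) *
      ∫⁻ ω, φ (fun t => w t ω) * ∑ k ∈ Finset.range n,
        ENNReal.ofReal (η (τ (k+1)) ω - η (τ k) ω) *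
          ENNReal.ofReal (energy ν α βt (x (τ k) ω) (y (τ k) ω)) ∂P := by
  have hτ0 : ∀ k, 0 ≤ τ k := fun k => hs.trans (hτs k)
  choose x' hx'm hx'e hx'p using fun k => exists_frozen (hx (τ k) (hτs k)) (H (τ k)) (hH _)
    (hηH _ (hτ0 k))
  choose y' hy'm hy'e hy'p using fun k => exists_frozen (hy (τ k) (hτs k)) (H (τ k)) (hH _)
    (hηH _ (hτ0 k))
  have hpair : Measurable (fun ω => ((fun t => w t ω, fun t => wt t ω) : (ℝ → E) × (ℝ → E))) :=
    (measurable_pi_lambda _ hw).prodMk (measurable_pi_lambda _ hwt.meas)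
  have hxm : ∀ k, Measurable (x (τ k)) := fun k => by
    rw [show x (τ k) = _ from funext (hx'e k)]; exact (hx'm k).comp hpair
  have hym : ∀ k, Measurable (y (τ k)) := fun k => by
    rw [show y (τ k) = _ from funext (hy'e k)]; exact (hy'm k).comp hpair
  have hηm : ∀ k, Measurable (η (τ k)) := fun k => by
    rw [show η (τ k) = _ from funext (hηH _ (hτ0 k))]
    exact (hH _).comp (measurable_pi_lambda _ hw)
  have hφm : Measurable (fun ω => φ (fun t => w t ω)) := hφ.comp (measurable_pi_lambda _ hw)
  have hito := ito_time_changed hν hw hwt hind (fun k => H (τ k)) (fun k => hH _)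
    (by
      filter_upwards [hηmono, hη0] with ω h1 h2
      constructor
      · rw [← hηH _ (hτ0 0), ← h2]; exact h1 (hτ0 0)
      · intro j k hjk
        simp only [← hηH _ (hτ0 _)]
        exact h1 (hτ hjk))
    (fun k q => βt (projS ν (x' k q)) - βt (projS ν (y' k q))) (2 * c)
    (fun k => (hβ.measurable.comp (hx'm k)).sub (hβ.measurable.comp (hy'm k)))
    (fun k q => (norm_sub_le _ _).trans (by linarith [hβc (x' k q), hβc (y' k q)]))
    (fun k p => (hβ.measurable.comp (hx'p k p)).sub (hβ.measurable.comp (hy'p k p)))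
    φ hφ n
  simp only [← hx'e, ← hy'e, ← hηH _ (hτ0 _)] at hito
  set D : Ω → E := fun ω => ∑ k ∈ Finset.range n, (η (τ (k+1)) ω - η (τ k) ω) •
          (α (projS ν (x (τ k) ω)) - α (projS ν (y (τ k) ω))) with hD
  set M : Ω → E := fun ω => ∑ k ∈ Finset.range n,
          (βt (projS ν (x (τ k) ω)) - βt (projS ν (y (τ k) ω)))
          (wt (η (τ (k+1)) ω) ω - wt (η (τ k) ω) ω) with hM
  set g : ℕ → Ω → ℝ := fun k ω => energy ν α βt (x (τ k) ω) (y (τ k) ω) with hg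
  have hgm : ∀ k, Measurable (g k) := fun k =>
    (((hα.measurable.comp (hxm k)).sub (hα.measurable.comp (hym k))).norm.pow_const 2).add
      (((hβ.measurable.comp (hxm k)).sub (hβ.measurable.comp (hym k))).norm.pow_const 2)
  set R : Ω → ENNReal := fun ω => φ (fun t => w t ω) * ∑ k ∈ Finset.range n,
        ENNReal.ofReal (η (τ (k+1)) ω - η (τ k) ω) * ENNReal.ofReal (g k ω) with hR
  have hRm : Measurable R := hφm.mul (Finset.measurable_fun_sum _ fun k _ =>
    ((hηm (k+1)).sub (hηm k)).ennreal_ofReal.mul (hgm k).ennreal_ofReal)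
  have hdrift : ∀ᵐ ω ∂P, φ (fun t => w t ω) * ENNReal.ofReal (‖D ω‖ ^ 2) ≤
      ENNReal.ofReal N * R ω := by
    filter_upwards [hηmono, hφN] with ω h1 h2
    by_cases h0 : φ (fun t => w t ω) = 0
    · simp [h0]
    have hΔ : ∀ k, 0 ≤ η (τ (k+1)) ω - η (τ k) ω := fun k =>
      sub_nonneg.mpr (h1 (hτ (Nat.le_succ k)))
    rw [hR, mul_left_comm]
    refine mul_le_mul_right ?_ _
    have h3 : ‖D ω‖ ^ 2 ≤ N * ∑ k ∈ Finset.range n, (η (τ (k+1)) ω - η (τ k) ω) * g k ω := by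
      refine (norm_sum_smul_sq_le n _ _ hΔ).trans ?_
      rw [Finset.sum_range_sub (fun k => η (τ k) ω)]
      refine mul_le_mul (h2 h0) (Finset.sum_le_sum fun k _ => ?_)
        (Finset.sum_nonneg fun k _ => mul_nonneg (hΔ k) (by positivity)) hN
      refine mul_le_mul_of_nonneg_left ?_ (hΔ k)
      exact le_add_of_nonneg_right (by positivity)
    refine (ENNReal.ofReal_le_ofReal h3).trans_eq ?_
    rw [ENNReal.ofReal_mul hN, ENNReal.ofReal_sum_of_nonneg fun k _ =>
      mul_nonneg (hΔ k) (energy_nonneg _ _ _ _ _)]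
    congr 1
    exact Finset.sum_congr rfl fun k _ => ENNReal.ofReal_mul (hΔ k)
  have hmart : ∫⁻ ω, φ (fun t => w t ω) * ENNReal.ofReal (‖M ω‖ ^ 2) ∂P ≤
      ENNReal.ofReal (Module.finrank ℝ E) * ∫⁻ ω, R ω ∂P := by
    refine hito.trans ?_
    rw [← lintegral_const_mul _ hRm]
    refine lintegral_mono fun ω => ?_
    rw [hR, mul_left_comm]
    refine mul_le_mul_right ?_ _
    rw [Finset.mul_sum]
    refine Finset.sum_le_sum fun k _ => ?_
    rw [ENNReal.ofReal_mul (Nat.cast_nonneg _), mul_assoc]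
    refine mul_le_mul_right (mul_le_mul_right (ENNReal.ofReal_le_ofReal ?_) _) _
    exact le_add_of_nonneg_left (by positivity)
  have hDm : Measurable D := Finset.measurable_fun_sum _ fun k _ =>
    ((hηm (k+1)).sub (hηm k)).smul
      ((hα.measurable.comp (hxm k)).sub (hα.measurable.comp (hym k)))
  calc ∫⁻ ω, φ (fun t => w t ω) * ENNReal.ofReal (‖D ω + M ω‖ ^ 2) ∂P
      ≤ ∫⁻ ω, 2 * (φ (fun t => w t ω) * ENNReal.ofReal (‖D ω‖ ^ 2)) +
          2 * (φ (fun t => w t ω) * ENNReal.ofReal (‖M ω‖ ^ 2)) ∂P := by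
        refine lintegral_mono fun ω => ?_
        have h1 : ‖D ω + M ω‖ ^ 2 ≤ 2 * ‖D ω‖ ^ 2 + 2 * ‖M ω‖ ^ 2 := by
          have := pow_le_pow_left₀ (norm_nonneg _) (norm_add_le (D ω) (M ω)) 2
          nlinarith [sq_nonneg (‖D ω‖ - ‖M ω‖)]
        have h2 : ENNReal.ofReal (‖D ω + M ω‖ ^ 2) ≤
            2 * ENNReal.ofReal (‖D ω‖ ^ 2) + 2 * ENNReal.ofReal (‖M ω‖ ^ 2) := by
          refine (ENNReal.ofReal_le_ofReal h1).trans_eq ?_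
          rw [ENNReal.ofReal_add (by positivity) (by positivity),
            ENNReal.ofReal_mul zero_le_two, ENNReal.ofReal_mul zero_le_two]
          simp
        refine (mul_le_mul_right h2 _).trans_eq ?_
        ring
    _ = 2 * ∫⁻ ω, φ (fun t => w t ω) * ENNReal.ofReal (‖D ω‖ ^ 2) ∂P +
          2 * ∫⁻ ω, φ (fun t => w t ω) * ENNReal.ofReal (‖M ω‖ ^ 2) ∂P := by
        have h1 : Measurable fun ω => φ (fun t => w t ω) * ENNReal.ofReal (‖D ω‖ ^ 2) :=
          hφm.mul (hDm.norm.pow_const 2).ennreal_ofReal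
        rw [lintegral_add_left (h1.const_mul 2), lintegral_const_mul _ h1,
          lintegral_const_mul' _ _ (by simp)]
    _ ≤ 2 * (ENNReal.ofReal N * ∫⁻ ω, R ω ∂P) +
          2 * (ENNReal.ofReal (Module.finrank ℝ E) * ∫⁻ ω, R ω ∂P) := by
        refine add_le_add (mul_le_mul_right ?_ _) (mul_le_mul_right hmart _)
        rw [← lintegral_const_mul _ hRm]
        exact lintegral_mono_ae hdrift
    _ = _ := by
        rw [ENNReal.ofReal_add (by positivity) (by positivity),
            ENNReal.ofReal_mul zero_le_two, ENNReal.ofReal_mul zero_le_two]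
        simp only [ENNReal.ofReal_ofNat]
        ring

end Energy

/-! ### Passage to the limit and iteration -/

section Iterate

variable {P : Measure Ω}

/-- Fatou's lemma for the weighted second moment along an a.s. convergent subsequence. -/
lemma lintegral_sq_le_of_tendsto {E : Type} [NormedAddCommGroup E] [MeasurableSpace E]
    [BorelSpace E] {ψ : Ω → ENNReal} (hψ : AEMeasurable ψ P) (hψt : ∀ᵐ ω ∂P, ψ ω ≠ ⊤)
    {F : ℕ → Ω → E} (hF : ∀ n, AEMeasurable (F n) P) {z : Ω → E}
    (hz : ∀ᵐ ω ∂P, Tendsto (fun n => F n ω) atTop (nhds (z ω))) {B : ENNReal}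
    (hB : ∀ n, ∫⁻ ω, ψ ω * ENNReal.ofReal (‖F n ω‖ ^ 2) ∂P ≤ B) :
    ∫⁻ ω, ψ ω * ENNReal.ofReal (‖z ω‖ ^ 2) ∂P ≤ B := by
  calc ∫⁻ ω, ψ ω * ENNReal.ofReal (‖z ω‖ ^ 2) ∂P
      = ∫⁻ ω, liminf (fun n => ψ ω * ENNReal.ofReal (‖F n ω‖ ^ 2)) atTop ∂P := by
        refine lintegral_congr_ae ?_
        filter_upwards [hz, hψt] with ω h1 h2
        refine (Tendsto.liminf_eq ?_).symm
        exact ENNReal.Tendsto.const_mul (ENNReal.tendsto_ofReal (h1.norm.pow 2)) (Or.inr h2)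
    _ ≤ liminf (fun n => ∫⁻ ω, ψ ω * ENNReal.ofReal (‖F n ω‖ ^ 2) ∂P) atTop :=
        lintegral_liminf_le' fun n => hψ.mul ((hF n).norm.pow_const 2).ennreal_ofReal
    _ ≤ B := by
        refine (liminf_le_liminf (Eventually.of_forall hB)).trans_eq ?_
        simp

/-- Four sequences converging in measure converge almost surely along a common subsequence. -/
lemma exists_common_subseq {E : Type} [NormedAddCommGroup E] {f₁ f₂ f₃ f₄ : ℕ → Ω → E}
    {g₁ g₂ g₃ g₄ : Ω → E} (h₁ : TendstoInMeasure P f₁ atTop g₁)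
    (h₂ : TendstoInMeasure P f₂ atTop g₂) (h₃ : TendstoInMeasure P f₃ atTop g₃)
    (h₄ : TendstoInMeasure P f₄ atTop g₄) :
    ∃ ns : ℕ → ℕ, ∀ᵐ ω ∂P, Tendsto (fun i => f₁ (ns i) ω) atTop (nhds (g₁ ω)) ∧
      Tendsto (fun i => f₂ (ns i) ω) atTop (nhds (g₂ ω)) ∧
      Tendsto (fun i => f₃ (ns i) ω) atTop (nhds (g₃ ω)) ∧
      Tendsto (fun i => f₄ (ns i) ω) atTop (nhds (g₄ ω)) := by
  obtain ⟨a, ha, ha'⟩ := h₁.exists_seq_tendsto_ae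
  obtain ⟨b, hb, hb'⟩ := (h₂.comp ha.tendsto_atTop).exists_seq_tendsto_ae
  obtain ⟨c, hc, hc'⟩ := (h₃.comp (ha.comp hb).tendsto_atTop).exists_seq_tendsto_ae
  obtain ⟨d, hd, hd'⟩ := (h₄.comp ((ha.comp hb).comp hc).tendsto_atTop).exists_seq_tendsto_ae
  refine ⟨fun i => a (b (c (d i))), ?_⟩
  filter_upwards [ha', hb', hc', hd'] with ω k1 k2 k3 k4
  exact ⟨k1.comp ((hb.comp hc).comp hd).tendsto_atTop, k2.comp (hc.comp hd).tendsto_atTop,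
    k3.comp hd.tendsto_atTop, k4⟩

/-- On `[0, ∞)` the convex function `r ^ (m + 1)` lies above its tangent at `a`. -/
lemma pow_tangent_le (m : ℕ) {a b : ℝ} (ha : 0 ≤ a) (hab : a ≤ b) :
    (m + 1) * (b - a) * a ^ m + a ^ (m + 1) ≤ b ^ (m + 1) := by
  induction m with
  | zero => simp
  | succ m ih =>
    have h1 := mul_le_mul_of_nonneg_left ih (ha.trans hab)
    have h2 : 0 ≤ ((m : ℝ) + 1) * (b - a) ^ 2 * a ^ m := by positivity
    push_cast
    calc _ = b * ((m + 1) * (b - a) * a ^ m + a ^ (m + 1)) -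
          ((m : ℝ) + 1) * (b - a) ^ 2 * a ^ m := by ring
      _ ≤ _ := by rw [pow_succ' b (m + 1)]; linarith

/-- A left Riemann sum of the increasing function `r ^ m / m!` is at most its integral. -/
lemma left_riemann_sum_le (m : ℕ) (A : ℕ → ℝ) (hA : Monotone A) (h0 : 0 ≤ A 0) (n : ℕ) :
    ∑ k ∈ Finset.range n, (A (k+1) - A k) * (A k ^ m / m.factorial) ≤
      A n ^ (m + 1) / (m + 1).factorial := by
  induction n with
  | zero => simp only [Finset.range_zero, Finset.sum_empty]; positivity
  | succ n ih =>
    rw [Finset.sum_range_succ]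
    have h1 := pow_tangent_le m (h0.trans (hA (Nat.zero_le n))) (hA (Nat.le_succ n))
    have hf : (0 : ℝ) < m.factorial := by positivity
    have hf2 : ((m + 1).factorial : ℝ) = (m + 1) * m.factorial := by
      rw [Nat.factorial_succ]; push_cast; ring
    have hm : (0 : ℝ) < m + 1 := by positivity
    refine (add_le_add_left ih _).trans ?_
    rw [hf2]
    have : A n ^ (m + 1) / ((m + 1) * m.factorial) + (A (n+1) - A n) * (A n ^ m / m.factorial) =
        ((m + 1) * (A (n+1) - A n) * A n ^ m + A n ^ (m + 1)) / ((m + 1) * m.factorial) := by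
      field_simp
      ring
    rw [this]
    gcongr

/-- A stochastic Grönwall inequality. The weights `φ` may be multiplied by increments of `η`, which
are functionals of the path of `w`; iterating the one-step inequality `hstep` therefore bounds
the weighted moments of `g u` by iterated integrals against `dη`. -/
lemma gronwall_iterate {E : Type} [MeasurableSpace E] {w : ℝ → Ω → E} {η : ℝ → Ω → ℝ}
    (hw : ∀ t, Measurable (w t)) (H : ℝ → (ℝ → E) → ℝ) (hH : ∀ u, Measurable (H u))
    (hηH : ∀ u, 0 ≤ u → ∀ ω, η u ω = H u (fun t => w t ω))
    (hηmono : ∀ᵐ ω ∂P, Monotone fun u => η u ω)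
    {s t : ℝ} (hs : 0 ≤ s) (g : ℝ → Ω → ℝ) (hg : ∀ u, s ≤ u → Measurable (g u))
    (c C N : ℝ) (hC : 0 ≤ C) (hgc : ∀ u ω, g u ω ≤ c)
    (hstep : ∀ φ : (ℝ → E) → ENNReal, Measurable φ → (∀ p, φ p ≠ ⊤) →
      (∀ ω, φ (fun t => w t ω) ≠ 0 → η t ω - η s ω ≤ N) →
      ∀ u, s ≤ u → u ≤ t → ∀ B : ENNReal,
      (∀ n : ℕ, ∫⁻ ω, φ (fun t => w t ω) * ∑ k ∈ Finset.range n,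
        ENNReal.ofReal (η (s + ((k + 1 : ℕ) : ℝ) * (u - s) / n) ω - η (s + (k:ℝ) * (u - s) / n) ω) *
          ENNReal.ofReal (g (s + (k:ℝ) * (u - s) / n) ω) ∂P ≤ B) →
      ∫⁻ ω, φ (fun t => w t ω) * ENNReal.ofReal (g u ω) ∂P ≤ ENNReal.ofReal C * B)
    (m : ℕ) :
    ∀ φ : (ℝ → E) → ENNReal, Measurable φ → (∀ p, φ p ≠ ⊤) →
      (∀ ω, φ (fun t => w t ω) ≠ 0 → η t ω - η s ω ≤ N) →
      ∀ u, s ≤ u → u ≤ t →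
      ∫⁻ ω, φ (fun t => w t ω) * ENNReal.ofReal (g u ω) ∂P ≤
        ENNReal.ofReal (c * C ^ m) * ∫⁻ ω, φ (fun t => w t ω) *
          ENNReal.ofReal ((η u ω - η s ω) ^ m / m.factorial) ∂P := by
  have hpath : Measurable (fun ω (t : ℝ) => w t ω) := measurable_pi_lambda _ hw
  have hηm : ∀ u, 0 ≤ u → Measurable (η u) := fun u hu => by
    rw [show η u = _ from funext (hηH u hu)]
    exact (hH _).comp hpath
  induction m with
  | zero =>
    intro φ hφ hφt hφN u hsu hut
    rw [← lintegral_const_mul' _ _ ENNReal.ofReal_ne_top]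
    refine lintegral_mono fun ω => ?_
    simp only [pow_zero, mul_one, Nat.factorial_zero, Nat.cast_one, div_one, ENNReal.ofReal_one]
    rw [mul_comm (ENNReal.ofReal c)]
    exact mul_le_mul_right (ENNReal.ofReal_le_ofReal (hgc u ω)) _
  | succ m ih =>
    intro φ hφ hφt hφN u hsu hut
    have hφm : Measurable (fun ω => φ (fun t => w t ω)) := hφ.comp hpath
    have hgoal := hstep φ hφ hφt hφN u hsu hut (ENNReal.ofReal (c * C ^ m) *
      ∫⁻ ω, φ (fun t => w t ω) *
          ENNReal.ofReal ((η u ω - η s ω) ^ (m + 1) / (m + 1).factorial) ∂P) ?_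
    · refine hgoal.trans_eq ?_
      rw [← mul_assoc, ← ENNReal.ofReal_mul hC]
      congr 2
      ring
    intro n
    rcases Nat.eq_zero_or_pos n with rfl | hn
    · simp
    have hn' : (0 : ℝ) < n := by exact_mod_cast hn
    set τ : ℕ → ℝ := fun k => s + (k:ℝ) * (u - s) / n with hτdef
    have hτ : Monotone τ := by
      intro i j hij
      have : (i : ℝ) ≤ j := by exact_mod_cast hij
      have := sub_nonneg.mpr hsu
      simp only [hτdef]
      gcongr
    have hτ0 : τ 0 = s := by simp [hτdef]
    have hτn : τ n = u := by simp only [hτdef]; field_simp; ring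
    have hτs : ∀ k, s ≤ τ k := fun k => hτ0 ▸ hτ (Nat.zero_le k)
    have hτu : ∀ k ≤ n, τ k ≤ u := fun k hk => hτn ▸ hτ hk
    have hτp : ∀ k, 0 ≤ τ k := fun k => hs.trans (hτs k)
    have hterm : ∀ k ∈ Finset.range n,
        ∫⁻ ω, φ (fun t => w t ω) * (ENNReal.ofReal (η (τ (k+1)) ω - η (τ k) ω) *
          ENNReal.ofReal (g (τ k) ω)) ∂P ≤
        ENNReal.ofReal (c * C ^ m) * ∫⁻ ω, φ (fun t => w t ω) *
          (ENNReal.ofReal (η (τ (k+1)) ω - η (τ k) ω) *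
          ENNReal.ofReal ((η (τ k) ω - η s ω) ^ m / m.factorial)) ∂P := by
      intro k hk
      have := ih (fun p => φ p * ENNReal.ofReal (H (τ (k+1)) p - H (τ k) p))
        (hφ.mul ((hH _).sub (hH _)).ennreal_ofReal)
        (fun p => ENNReal.mul_ne_top (hφt p) ENNReal.ofReal_ne_top)
        (fun ω h0 => hφN ω (left_ne_zero_of_mul h0)) (τ k) (hτs k)
        ((hτu k (Finset.mem_range.mp hk).le).trans hut)
      simpa only [← hηH _ (hτp _), mul_assoc] using this
    have hm1 : ∀ k, Measurable fun ω => ENNReal.ofReal (η (τ (k+1)) ω - η (τ k) ω) :=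
      fun k => ((hηm _ (hτp _)).sub (hηm _ (hτp _))).ennreal_ofReal
    have hm2 : ∀ k, Measurable fun ω =>
        ENNReal.ofReal ((η (τ k) ω - η s ω) ^ m / m.factorial) :=
      fun k => ((((hηm _ (hτp _)).sub (hηm _ hs)).pow_const m).div_const _).ennreal_ofReal
    calc ∫⁻ ω, φ (fun t => w t ω) * ∑ k ∈ Finset.range n,
          ENNReal.ofReal (η (τ (k+1)) ω - η (τ k) ω) * ENNReal.ofReal (g (τ k) ω) ∂P
        = ∑ k ∈ Finset.range n, ∫⁻ ω, φ (fun t => w t ω) *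
          (ENNReal.ofReal (η (τ (k+1)) ω - η (τ k) ω) * ENNReal.ofReal (g (τ k) ω)) ∂P := by
          simp only [Finset.mul_sum]
          exact lintegral_finsetSum _ fun k _ =>
            hφm.mul ((hm1 k).mul (hg _ (hτs k)).ennreal_ofReal)
      _ ≤ _ := Finset.sum_le_sum hterm
      _ = ENNReal.ofReal (c * C ^ m) * ∫⁻ ω, φ (fun t => w t ω) * ∑ k ∈ Finset.range n,
          ENNReal.ofReal (η (τ (k+1)) ω - η (τ k) ω) *
          ENNReal.ofReal ((η (τ k) ω - η s ω) ^ m / m.factorial) ∂P := by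
          rw [← Finset.mul_sum]
          congr 1
          simp only [Finset.mul_sum]
          exact (lintegral_finsetSum _ fun k _ => hφm.mul ((hm1 k).mul (hm2 k))).symm
      _ ≤ _ := by
          refine mul_le_mul_right (lintegral_mono_ae ?_) _
          filter_upwards [hηmono] with ω hω
          refine mul_le_mul_right ?_ _
          have hA : Monotone fun k => η (τ k) ω - η s ω := fun i j hij =>
            sub_le_sub_right (hω (hτ hij)) _
          have hA0 : 0 ≤ η (τ 0) ω - η s ω := by rw [hτ0]; simp
          have h1 := left_riemann_sum_le m _ hA hA0 n
          simp only [sub_sub_sub_cancel_right, hτn] at h1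
          refine le_trans (le_of_eq ?_) (ENNReal.ofReal_le_ofReal h1)
          rw [ENNReal.ofReal_sum_of_nonneg]
          · exact Finset.sum_congr rfl fun k _ =>
              (ENNReal.ofReal_mul (sub_nonneg.mpr (hω (hτ (Nat.le_succ k))))).symm
          · intro k _
            refine mul_nonneg (sub_nonneg.mpr (hω (hτ (Nat.le_succ k)))) ?_
            have : 0 ≤ η (τ k) ω - η s ω := hA0.trans (hA (Nat.zero_le k))
            positivity

end Iterate

/-! ### Sampling at the random times `η u` and the conclusion -/

/-- The natural filtration consists of events depending on the path only. -/
lemma natFilt_le_comap {E F : Type} [MeasurableSpace E] [MeasurableSpace F] {w : ℝ → Ω → E}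
    {f : E → F} (hf : Measurable f) (u : ℝ) :
    natFilt (fun t ω => f (w t ω)) u ≤
      MeasurableSpace.comap (fun ω (t : ℝ) => w t ω) MeasurableSpace.pi := by
  refine iSup₂_le fun r _ => ?_
  rintro _ ⟨Γ, hΓ, rfl⟩
  exact ⟨(fun p : ℝ → E => p r) ⁻¹' (f ⁻¹' Γ), measurable_pi_apply r (hf hΓ), rfl⟩

/-- A process with a.s. continuous paths may be evaluated at a nonnegative random time. -/
lemma aemeasurable_eval {E : Type} [NormedAddCommGroup E] [MeasurableSpace E] [BorelSpace E]
    {P : Measure Ω} {wt : ℝ → Ω → E} (hm : ∀ t, Measurable (wt t))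
    (hc : ∀ᵐ ω ∂P, Continuous fun t => wt t ω) {T : Ω → ℝ} (hT : Measurable T)
    (hT0 : ∀ᵐ ω ∂P, 0 ≤ T ω) : AEMeasurable (fun ω => wt (T ω) ω) P := by
  refine aemeasurable_of_tendsto_metrizable_ae atTop
    (f := fun (m : ℕ) ω => wt ((⌊T ω * (m:ℝ)⌋₊ : ℝ) / m) ω) (fun m => ?_) ?_
  · have h1 : Measurable (fun z : Ω × ℕ => wt ((z.2 : ℝ) / m) z.1) :=
      measurable_from_prod_countable_left fun j => hm ((j : ℝ) / (m : ℝ))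
    have h2 : Measurable (fun ω => (ω, ⌊T ω * (m:ℝ)⌋₊)) := by fun_prop
    exact (h1.comp h2).aemeasurable
  · filter_upwards [hc, hT0] with ω h1 h2
    exact (h1.tendsto _).comp
      ((tendsto_nat_floor_mul_div_atTop h2).comp tendsto_natCast_atTop_atTop)

/-- Restarted pathwise uniqueness: under the boundedness and Lipschitz
assumptions, any two `(M_u)`-adapted processes satisfying the SDE on `[s, t]` with the same
value at time `s` coincide a.s. on `[s, t]`. -/
theorem sde_restarted_pathwise_uniqueness
    {E : Type} [NormedAddCommGroup E] [InnerProductSpace ℝ E] [MeasurableSpace E] [BorelSpace E]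
    (P : Measure Ω) [IsProbabilityMeasure P]
    (ν : E) (hν : ‖ν‖ = 1) (q : ℝ) (hq : q ∈ Set.Icc (-1 : ℝ) 1)
    (α : E → E) (βt : E → E →L[ℝ] E)
    (hαS : ∀ v, ⟪α v, ν⟫ = 0) (hβS : ∀ v u, ⟪βt v u, ν⟫ = 0)
    (K : ℝ) (hK : 0 < K)
    (hbd : ∀ v : E, ⟪v, ν⟫ = 0 → ‖α v‖ + ‖βt v‖ ≤ K)
    (hlip : ∀ v v' : E, ⟪v, ν⟫ = 0 → ⟪v', ν⟫ = 0 →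
      ‖α v - α v'‖ ^ 2 + ‖βt v - βt v'‖ ^ 2 ≤ K * ‖v - v'‖ ^ 2)
    (w : ℝ → Ω → E) (hw : IsWiener P w)
    (wt : ℝ → Ω → E) (hwt : IsWienerIn P ν wt) (hind : IndepProc P w wt)
    (x1 η : ℝ → Ω → ℝ) (a : ℝ)
    (hskew : IsSkewLT P q (fun t ω => ⟪w t ω, ν⟫) a x1 η)
    (s t : ℝ) (hs : 0 ≤ s) (hst : s ≤ t)
    (ξ : Ω → E) (x y : ℝ → Ω → E)
    (hx : SolvesFrom P (MFilt w wt η) ν q α βt w η (fun u ω => wt (η u ω) ω) s ξ x)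
    (hy : SolvesFrom P (MFilt w wt η) ν q α βt w η (fun u ω => wt (η u ω) ω) s ξ y) :
    ∀ u : ℝ, s ≤ u → u ≤ t → ∀ᵐ ω ∂P, x u ω = y u ω := by
  have := finiteDimensional_of_isWiener P w hw
  obtain ⟨hα, hβ⟩ := continuous_coeff hν hK hlip
  have hβK : ∀ v, ‖βt (projS ν v)‖ ≤ K := fun v => by
    linarith [hbd _ (projS_inner_self hν v), norm_nonneg (α (projS ν v))]
  have hpath : Measurable (fun ω (t : ℝ) => w t ω) := measurable_pi_lambda _ hw.meas
  -- the local time is a functional of the path of `w`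
  have hexH : ∀ u, ∃ h : (ℝ → E) → ℝ, Measurable h ∧
      (0 ≤ u → ∀ ω, η u ω = h (fun t => w t ω)) := by
    intro u
    by_cases hu : 0 ≤ u
    · have h1 : Measurable[MeasurableSpace.comap (fun ω (t : ℝ) => w t ω) MeasurableSpace.pi]
          (η u) := (hskew.adapted_eta u hu).mono
        (natFilt_le_comap (f := fun v : E => ⟪v, ν⟫) (by fun_prop) u) le_rfl
      obtain ⟨h, hh, he⟩ := h1.exists_eq_measurable_comp
      exact ⟨h, hh, fun _ ω => congrFun he ω⟩
    · exact ⟨fun _ => 0, measurable_const, fun h => absurd h hu⟩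
  choose H hH hηH using hexH
  have hηm : ∀ u, 0 ≤ u → Measurable (η u) := fun u hu => by
    rw [show η u = _ from funext (hηH u hu)]
    exact (hH _).comp hpath
  have hpair : Measurable (fun ω => ((fun t => w t ω, fun t => wt t ω) : (ℝ → E) × (ℝ → E))) :=
    hpath.prodMk (measurable_pi_lambda _ hwt.meas)
  have hmeas : ∀ (f : Ω → E) (u : ℝ), s ≤ u → Measurable[MFilt w wt η u] f → Measurable f := by
    intro f u hu hf
    obtain ⟨f', hf', he, -⟩ := exists_frozen hf (H u) (hH u) (hηH u (hs.trans hu))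
    rw [show f = _ from funext he]
    exact hf'.comp hpair
  have hxm : ∀ u, s ≤ u → Measurable (x u) := fun u hu => hmeas _ u hu (hx.adapted u hu)
  have hym : ∀ u, s ≤ u → Measurable (y u) := fun u hu => hmeas _ u hu (hy.adapted u hu)
  set g : ℝ → Ω → ℝ := fun u ω => energy ν α βt (x u ω) (y u ω) with hgdef
  have hgm : ∀ u, s ≤ u → Measurable (g u) := fun u hu =>
    (((hα.measurable.comp (hxm u hu)).sub (hα.measurable.comp (hym u hu))).norm.pow_const 2).add
      (((hβ.measurable.comp (hxm u hu)).sub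
        (hβ.measurable.comp (hym u hu))).norm.pow_const 2)
  -- the one-step estimate for the difference of the two solutions
  have hdist : ∀ N : ℝ, 0 ≤ N → ∀ φ : (ℝ → E) → ENNReal, Measurable φ → (∀ p, φ p ≠ ⊤) →
      (∀ ω, φ (fun t => w t ω) ≠ 0 → η t ω - η s ω ≤ N) →
      ∀ u, s ≤ u → u ≤ t → ∀ B : ENNReal,
      (∀ n : ℕ, ∫⁻ ω, φ (fun t => w t ω) * ∑ k ∈ Finset.range n,
        ENNReal.ofReal (η (s + ((k + 1 : ℕ) : ℝ) * (u - s) / n) ω - η (s + (k:ℝ) * (u - s) / n) ω) *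
          ENNReal.ofReal (g (s + (k:ℝ) * (u - s) / n) ω) ∂P ≤ B) →
      ∫⁻ ω, φ (fun t => w t ω) * ENNReal.ofReal (‖x u ω - y u ω‖ ^ 2) ∂P ≤
        ENNReal.ofReal (2 * N + 2 * Module.finrank ℝ E) * B := by
    intro N hN φ hφ hφt hφN u hsu hut B hB
    obtain ⟨A₁, M₁, hA₁, hM₁, he₁⟩ := hx.eqn u hsu
    obtain ⟨A₂, M₂, hA₂, hM₂, he₂⟩ := hy.eqn u hsu
    obtain ⟨ns, hns⟩ := exists_common_subseq hA₁ hM₁ hA₂ hM₂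
    set τ : ℕ → ℕ → ℝ := fun n k => s + (k:ℝ) * (u - s) / n with hτdef
    have hτ : ∀ n, Monotone (τ n) := by
      intro n i j hij
      have : (i : ℝ) ≤ j := by exact_mod_cast hij
      have := sub_nonneg.mpr hsu
      simp only [hτdef]
      gcongr
    have hτ0 : ∀ n, τ n 0 = s := fun n => by simp [hτdef]
    have hτs : ∀ n k, s ≤ τ n k := fun n k => hτ0 n ▸ hτ n (Nat.zero_le k)
    have hτn : ∀ n, τ n n ≤ u := by
      intro n
      rcases Nat.eq_zero_or_pos n with rfl | hn
      · rw [hτ0]; exact hsu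
      · have hn' : (0 : ℝ) < n := by exact_mod_cast hn
        refine le_of_eq ?_
        simp only [hτdef]; field_simp; ring
    let F : ℕ → Ω → E := fun n ω =>
      (∑ k ∈ Finset.range n, (η (τ n (k+1)) ω - η (τ n k) ω) •
          (α (projS ν (x (τ n k) ω)) - α (projS ν (y (τ n k) ω)))) +
        ∑ k ∈ Finset.range n, (βt (projS ν (x (τ n k) ω)) - βt (projS ν (y (τ n k) ω)))
          (wt (η (τ n (k+1)) ω) ω - wt (η (τ n k) ω) ω)
    have hηpos : ∀ r, 0 ≤ r → ∀ᵐ ω ∂P, 0 ≤ η r ω := by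
      intro r hr
      filter_upwards [hskew.mono, hskew.zero] with ω h1 h2
      rw [← h2]; exact h1 hr
    have happ : Continuous fun p : (E →L[ℝ] E) × E => p.1 p.2 := by fun_prop
    have hFm : ∀ n, AEMeasurable (F n) P := by
      intro n
      have hz : ∀ k, AEMeasurable (fun ω => wt (η (τ n k) ω) ω) P := fun k =>
        aemeasurable_eval hwt.meas hwt.cont (hηm _ (hs.trans (hτs n k)))
          (hηpos _ (hs.trans (hτs n k)))
      refine AEMeasurable.add ?_ ?_
      · refine (Finset.measurable_fun_sum _ fun k _ => ?_).aemeasurable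
        exact ((hηm _ (hs.trans (hτs n _))).sub (hηm _ (hs.trans (hτs n _)))).smul
          ((hα.measurable.comp (hxm _ (hτs n k))).sub (hα.measurable.comp (hym _ (hτs n k))))
      · refine Finset.aemeasurable_fun_sum _ fun k _ => ?_
        exact happ.measurable.comp_aemeasurable
          (((hβ.measurable.comp (hxm _ (hτs n k))).sub
            (hβ.measurable.comp (hym _ (hτs n k)))).aemeasurable.prodMk ((hz (k+1)).sub (hz k)))
    refine lintegral_sq_le_of_tendsto (F := fun i => F (ns i)) (hφ.comp hpath).aemeasurable
      (Eventually.of_forall fun ω => hφt _) (fun i => hFm _) ?_ fun i => ?_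
    · filter_upwards [hns, he₁, he₂] with ω ⟨h1, h2, h3, h4⟩ e1 e2
      have hlim := (h1.sub h3).add (h2.sub h4)
      rw [show A₁ ω - A₂ ω + (M₁ ω - M₂ ω) = x u ω - y u ω by rw [e1, e2]; abel] at hlim
      refine hlim.congr fun i => ?_
      simp only [F, hτdef]
      rw [← Finset.sum_sub_distrib, ← Finset.sum_sub_distrib]
      congr 1
      · refine Finset.sum_congr rfl fun k _ => ?_
        rw [← smul_sub, add_sub_add_left_eq_sub]
        push_cast
        rfl
      · refine Finset.sum_congr rfl fun k _ => ?_
        rw [_root_.sub_apply]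
        push_cast
        rfl
    · refine (energy_step hν hw.meas hwt hind H hH hηH hskew.mono hskew.zero hα hβ K hβK hs
        hx.adapted hy.adapted (τ (ns i)) (hτ _) (hτs _) (ns i) φ hφ N hN ?_).trans
        (mul_le_mul_right (hB (ns i)) _)
      filter_upwards [hskew.mono] with ω hω h0
      refine le_trans ?_ (hφN ω h0)
      rw [hτ0]
      exact sub_le_sub_right (hω ((hτn _).trans hut)) _
  -- on `{η t - η s ≤ N}` the energy vanishes, hence so does the difference of the solutions
  have hzero : ∀ (N : ℕ) (u : ℝ), s ≤ u → u ≤ t →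
      ∀ᵐ ω ∂P, η t ω - η s ω ≤ N → x u ω = y u ω := by
    intro N
    -- the event is expressed through the path of `w`, so that its indicator is a legal weight
    let φ : (ℝ → E) → ENNReal := Set.indicator {p | H t p - H s p ≤ N} 1
    have hφs : MeasurableSet {p | H t p - H s p ≤ (N:ℝ)} :=
      measurableSet_le ((hH t).sub (hH s)) measurable_const
    have hφ : Measurable φ := measurable_one.indicator hφs
    have hφ1 : ∀ p, φ p ≤ 1 := fun p => Set.indicator_le_self' (by simp) p
    have hφt : ∀ p, φ p ≠ ⊤ := fun p => ne_top_of_le_ne_top ENNReal.one_ne_top (hφ1 p)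
    have ht : 0 ≤ t := hs.trans hst
    have hφN : ∀ ω, φ (fun t => w t ω) ≠ 0 → η t ω - η s ω ≤ N := by
      intro ω h0
      have : (fun t => w t ω) ∈ {p | H t p - H s p ≤ (N:ℝ)} := Set.mem_of_indicator_ne_zero h0
      rwa [hηH t ht, hηH s hs]
    have hN : (0:ℝ) ≤ N := Nat.cast_nonneg N
    set C₀ : ℝ := 2 * N + 2 * Module.finrank ℝ E with hC₀
    have hC₀' : 0 ≤ C₀ := by positivity
    have hvanish : ∀ u, s ≤ u → u ≤ t →
        ∫⁻ ω, φ (fun t => w t ω) * ENNReal.ofReal (g u ω) ∂P = 0 := by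
      intro u hsu hut
      have hiter := fun m => gronwall_iterate hw.meas H hH hηH hskew.mono hs g hgm
        (8 * K ^ 2) (K * C₀) N (by positivity)
        (fun u ω => energy_le_const hν hbd _ _)
        (by
          intro φ hφ hφt hφN u hsu hut B hB
          have h1 := hdist N hN φ hφ hφt hφN u hsu hut B hB
          calc ∫⁻ ω, φ (fun t => w t ω) * ENNReal.ofReal (g u ω) ∂P
              ≤ ∫⁻ ω, ENNReal.ofReal K *
                  (φ (fun t => w t ω) * ENNReal.ofReal (‖x u ω - y u ω‖ ^ 2)) ∂P := by
                refine lintegral_mono fun ω => ?_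
                rw [mul_left_comm, ← ENNReal.ofReal_mul hK.le]
                exact mul_le_mul_right
                  (ENNReal.ofReal_le_ofReal (energy_le_dist hν hK hlip _ _)) _
            _ = ENNReal.ofReal K * ∫⁻ ω,
                  φ (fun t => w t ω) * ENNReal.ofReal (‖x u ω - y u ω‖ ^ 2) ∂P :=
                lintegral_const_mul' _ _ ENNReal.ofReal_ne_top
            _ ≤ ENNReal.ofReal K * (ENNReal.ofReal C₀ * B) := mul_le_mul_right h1 _
            _ = ENNReal.ofReal (K * C₀) * B := by rw [ENNReal.ofReal_mul hK.le, mul_assoc])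
        m φ hφ hφt hφN u hsu hut
      have hbound : ∀ m : ℕ, ∫⁻ ω, φ (fun t => w t ω) * ENNReal.ofReal (g u ω) ∂P ≤
          ENNReal.ofReal (8 * K ^ 2 * ((K * C₀ * N) ^ m / m.factorial)) := by
        intro m
        refine (hiter m).trans ?_
        have h1 : ∫⁻ ω, φ (fun t => w t ω) *
            ENNReal.ofReal ((η u ω - η s ω) ^ m / m.factorial) ∂P ≤
            ENNReal.ofReal ((N:ℝ) ^ m / m.factorial) := by
          calc _ ≤ ∫⁻ _, ENNReal.ofReal ((N:ℝ) ^ m / m.factorial) ∂P := by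
                refine lintegral_mono_ae ?_
                filter_upwards [hskew.mono] with ω hω
                by_cases h0 : φ (fun t => w t ω) = 0
                · simp [h0]
                refine (mul_le_mul_left (hφ1 _) _).trans ?_
                rw [one_mul]
                refine ENNReal.ofReal_le_ofReal ?_
                have h2 : 0 ≤ η u ω - η s ω := sub_nonneg.mpr (hω hsu)
                have h3 : η u ω - η s ω ≤ N := (sub_le_sub_right (hω hut) _).trans (hφN ω h0)
                gcongr
            _ = _ := by simp
        refine (mul_le_mul_right h1 _).trans_eq ?_
        rw [← ENNReal.ofReal_mul (by positivity)]
        congr 1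
        rw [mul_pow (K * C₀)]
        ring
      have hlim : Tendsto (fun m : ℕ =>
          ENNReal.ofReal (8 * K ^ 2 * ((K * C₀ * N) ^ m / m.factorial))) atTop (nhds 0) := by
        have h1 := (FloorSemiring.tendsto_pow_div_factorial_atTop (K * C₀ * N)).const_mul
          (8 * K ^ 2)
        have h2 := ENNReal.tendsto_ofReal h1
        simpa using h2
      exact le_antisymm (ge_of_tendsto' hlim hbound) zero_le
    intro u hsu hut
    -- every Riemann sum of the energy has zero weighted integral, so the bound `B = 0` is allowed
    have hd := hdist N hN φ hφ hφt hφN u hsu hut 0 (by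
      intro n
      refine le_of_eq ?_
      have hτ : ∀ k ∈ Finset.range n, s ≤ s + (k:ℝ) * (u - s) / n ∧
          s + (k:ℝ) * (u - s) / n ≤ t := by
        intro k hk
        have hk' := Finset.mem_range.mp hk
        have hn' : (0 : ℝ) < n := by exact_mod_cast (Nat.zero_le k).trans_lt hk'
        have hkn : (k:ℝ) ≤ n := by exact_mod_cast hk'.le
        have h1 := sub_nonneg.mpr hsu
        constructor
        · have : 0 ≤ (k:ℝ) * (u - s) / n := by positivity
          linarith
        · have : (k:ℝ) * (u - s) / n ≤ u - s := by
            rw [div_le_iff₀ hn', mul_comm]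
            exact mul_le_mul_of_nonneg_left hkn h1
          linarith
      have hae : ∀ᵐ ω ∂P, ∀ k ∈ Finset.range n, φ (fun t => w t ω) *
          ENNReal.ofReal (g (s + (k:ℝ) * (u - s) / n) ω) = 0 := by
        rw [eventually_all_finset]
        intro k hk
        refine (lintegral_eq_zero_iff ?_).mp (hvanish _ (hτ k hk).1 (hτ k hk).2)
        exact (hφ.comp hpath).mul (hgm _ (hτ k hk).1).ennreal_ofReal
      rw [lintegral_congr_ae (g := fun _ => 0), lintegral_zero]
      filter_upwards [hae] with ω hω
      rw [Finset.mul_sum]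
      refine Finset.sum_eq_zero fun k hk => ?_
      rw [mul_left_comm, hω k hk, mul_zero])
    have hdm : Measurable fun ω =>
        φ (fun t => w t ω) * ENNReal.ofReal (‖x u ω - y u ω‖ ^ 2) :=
      (hφ.comp hpath).mul (((hxm u hsu).sub (hym u hsu)).norm.pow_const 2).ennreal_ofReal
    rw [mul_zero, nonpos_iff_eq_zero, lintegral_eq_zero_iff hdm] at hd
    filter_upwards [hd] with ω hω hle
    have hmem : (fun t => w t ω) ∈ {p | H t p - H s p ≤ (N:ℝ)} := by
      rw [hηH t ht, hηH s hs] at hle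
      exact hle
    have hone : φ (fun t => w t ω) = 1 := Set.indicator_of_mem hmem _
    simp only [hone, one_mul, Pi.zero_apply, ENNReal.ofReal_eq_zero] at hω
    have h1 : ‖x u ω - y u ω‖ = 0 := pow_eq_zero_iff two_ne_zero |>.mp
      (le_antisymm hω (by positivity))
    exact sub_eq_zero.mp (norm_eq_zero.mp h1)
  intro u hsu hut
  filter_upwards [ae_all_iff.mpr fun N : ℕ => hzero N u hsu hut] with ω hω
  obtain ⟨N, hN⟩ := exists_nat_ge (η t ω - η s ω)
  exact hω N hN
end
end
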